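/- arXiv:1208.0713 — 2 statements merged into one kernel-verified Lean document; each statement's English description precedes it below -/
import Mathlib

section
/- Let n ≥ m ≥ 1, u, v ∈ A+ and Z ∈ {X,Y}. If u and v agree on condensed rankers from uR^Z_{m,n}, then u and v agree on rankers from uR^Z_{m,n}; that is, every ranker of uR^Z_{m,n} is defined on u if and only if it is defined on v. -/
namespace RankerPaper

variable {A : Type*} [DecidableEq A]

/-- Letters of rankers: `X a` ("next `a` to the right") and `Y a` ("next `a` to the left"). -/
inductive RLetter (A : Type*) where
  | X : A → RLetter A
  | Y : A → RLetter A
  deriving DecidableEq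

/-- Least `a`-position of `u` strictly greater than `q` (positions are 1-indexed). -/
def nextOcc (u : List A) (a : A) (q : ℕ) : Option ℕ :=
  ((List.range (u.length + 2)).filter (fun i => decide (q < i ∧ u[i-1]? = some a))).head?

/-- Greatest `a`-position of `u` strictly less than `q` (positions are 1-indexed). -/
def prevOcc (u : List A) (a : A) (q : ℕ) : Option ℕ :=
  ((List.range (u.length + 2)).filter
    (fun i => decide (1 ≤ i ∧ i < q ∧ u[i-1]? = some a))).getLast?

/-- One evaluation step of a ranker letter from position `q`. -/
def stepR (u : List A) : RLetter A → ℕ → Option ℕ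
  | .X a, q => nextOcc u a q
  | .Y a, q => prevOcc u a q

/-- Evaluation of a ranker from position `q`, processing letters left to right. -/
def evalFrom (u : List A) : List (RLetter A) → ℕ → Option ℕ
  | [], q => some q
  | z :: r, q => (stepR u z q).bind (evalFrom u r)

/-- Starting position: `0` for an `X`-letter, `|u|+1` for a `Y`-letter. -/
def startPos (u : List A) : RLetter A → ℕ
  | .X _ => 0
  | .Y _ => u.length + 1

/-- The position `r(u)` defined by the ranker `r` on `u` (`none` if undefined;
empty rankers are considered undefined, rankers being nonempty words). -/
def evalR (u : List A) (r : List (RLetter A)) : Option ℕ :=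
  match r with
  | [] => none
  | z :: t => evalFrom u (z :: t) (startPos u z)

/-- `r` is defined on `u`. -/
def Defined (u : List A) (r : List (RLetter A)) : Prop := (evalR u r).isSome

/-- The position `r(u)` (defaulting to `0` when undefined). -/
def pos (u : List A) (r : List (RLetter A)) : ℕ := (evalR u r).getD 0

/-- Do two ranker letters have the same direction? -/
def sameDir : RLetter A → RLetter A → Bool
  | .X _, .X _ => true
  | .Y _, .Y _ => true
  | _, _ => false

/-- Number of (alternating) blocks of a ranker. -/
def numBlocks : List (RLetter A) → ℕ
  | [] => 0
  | [_] => 1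
  | z :: w :: t => (if sameDir z w then 0 else 1) + numBlocks (w :: t)

def startsX (r : List (RLetter A)) : Prop := ∃ a t, r = RLetter.X a :: t
def startsY (r : List (RLetter A)) : Prop := ∃ a t, r = RLetter.Y a :: t
def endsX (r : List (RLetter A)) : Prop := ∃ a, r.getLast? = some (RLetter.X a)
def endsY (r : List (RLetter A)) : Prop := ∃ a, r.getLast? = some (RLetter.Y a)

/-- `R^X_{m,n}`: rankers with exactly `m` blocks, depth `n`, starting with an `X`-block. -/
def RX (m n : ℕ) (r : List (RLetter A)) : Prop :=
  numBlocks r = m ∧ r.length = n ∧ startsX r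

/-- `R^Y_{m,n}`: rankers with exactly `m` blocks, depth `n`, starting with a `Y`-block. -/
def RY (m n : ℕ) (r : List (RLetter A)) : Prop :=
  numBlocks r = m ∧ r.length = n ∧ startsY r

/-- `uR^X_{m,n}`. -/
def uRX (m n : ℕ) (r : List (RLetter A)) : Prop :=
  (∃ m' n', m' ≤ m ∧ n' ≤ n ∧ RX m' n' r) ∨ (∃ m' n', m' < m ∧ n' < n ∧ RY m' n' r)

/-- `uR^Y_{m,n}`. -/
def uRY (m n : ℕ) (r : List (RLetter A)) : Prop :=
  (∃ m' n', m' ≤ m ∧ n' ≤ n ∧ RY m' n' r) ∨ (∃ m' n', m' < m ∧ n' < n ∧ RX m' n' r)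

/-- `uR_{m,n} = uR^X_{m,n} ∪ uR^Y_{m,n}`. -/
def uR (m n : ℕ) (r : List (RLetter A)) : Prop := uRX m n r ∨ uRY m n r

/-- `uR^X_m = ∪_{n ≥ m} uR^X_{m,n}`. -/
def uRXm (m : ℕ) (r : List (RLetter A)) : Prop := ∃ n, m ≤ n ∧ uRX m n r

/-- `uR^Y_m = ∪_{n ≥ m} uR^Y_{m,n}`. -/
def uRYm (m : ℕ) (r : List (RLetter A)) : Prop := ∃ n, m ≤ n ∧ uRY m n r

/-- `r = Z₁ ⋯ Z_n` is condensed on `u`: it is defined on `u` and there is a chain of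
open intervals `(0;|u|+1) = (i₀;j₀) ⊃ (i₁;j₁) ⊃ ⋯ ⊃ (i_{n-1};j_{n-1}) ∋ r(u)`
updated according to the pairs `Z_ℓ Z_{ℓ+1}`. -/
def Condensed (u : List A) (r : List (RLetter A)) : Prop :=
  ∃ (p : ℕ) (i j : ℕ → ℕ),
    evalR u r = some p ∧
    i 0 = 0 ∧ j 0 = u.length + 1 ∧
    (∀ ℓ a b, 1 ≤ ℓ → r[ℓ-1]? = some (RLetter.X a) → r[ℓ]? = some (RLetter.X b) →
        nextOcc u a (i (ℓ-1)) = some (i ℓ) ∧ j ℓ = j (ℓ-1)) ∧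
    (∀ ℓ a b, 1 ≤ ℓ → r[ℓ-1]? = some (RLetter.Y a) → r[ℓ]? = some (RLetter.Y b) →
        i ℓ = i (ℓ-1) ∧ prevOcc u a (j (ℓ-1)) = some (j ℓ)) ∧
    (∀ ℓ a b, 1 ≤ ℓ → r[ℓ-1]? = some (RLetter.X a) → r[ℓ]? = some (RLetter.Y b) →
        i ℓ = i (ℓ-1) ∧ nextOcc u a (i (ℓ-1)) = some (j ℓ)) ∧
    (∀ ℓ a b, 1 ≤ ℓ → r[ℓ-1]? = some (RLetter.Y a) → r[ℓ]? = some (RLetter.X b) →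
        prevOcc u a (j (ℓ-1)) = some (i ℓ) ∧ j ℓ = j (ℓ-1)) ∧
    (∀ ℓ, 1 ≤ ℓ → ℓ < r.length →
        i (ℓ-1) ≤ i ℓ ∧ j ℓ ≤ j (ℓ-1) ∧ (i (ℓ-1) < i ℓ ∨ j ℓ < j (ℓ-1))) ∧
    i (r.length - 1) < p ∧ p < j (r.length - 1)

/-- `u` and `v` agree on rankers from the set `R`. -/
def AgreeDef (R : List (RLetter A) → Prop) (u v : List A) : Prop :=
  ∀ r, R r → (Defined u r ↔ Defined v r)

/-- `u` and `v` agree on condensed rankers from the set `R`. -/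
def AgreeCond (R : List (RLetter A) → Prop) (u v : List A) : Prop :=
  ∀ r, R r → (Condensed u r ↔ Condensed v r)

/-- `u ⊳_{m,n} v`. -/
def trir (m n : ℕ) (u v : List A) : Prop := AgreeCond (uRX m n) u v

/-- `u ⊲_{m,n} v`. -/
def tril (m n : ℕ) (u v : List A) : Prop := AgreeCond (uRY m n) u v

/-- The alphabet (set of letters) of a word. -/
def alph (u : List A) : Finset A := u.toFinset

/-- Condition (WI 1). -/
def WI1 (m n : ℕ) (u v : List A) : Prop := AgreeDef (uR m n) u v

/-- Condition (WI 2). -/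
def WI2 (m n : ℕ) (u v : List A) : Prop :=
  ∀ r r', uR m n r → uR (m-1) (n-1) r' →
    Defined u r → Defined v r → Defined u r' → Defined v r' →
    compare (pos u r) (pos u r') = compare (pos v r) (pos v r')

/-- Condition (WI 3). -/
def WI3 (m n : ℕ) (u v : List A) : Prop :=
  ∀ r r', uR m n r → uR m (n-1) r' →
    ((endsX r ∧ endsY r') ∨ (endsY r ∧ endsX r')) →
    Defined u r → Defined v r → Defined u r' → Defined v r' →
    compare (pos u r) (pos u r') = compare (pos v r) (pos v r')

/-- Condition (WI 1c). -/
def WI1c (m n : ℕ) (u v : List A) : Prop := AgreeCond (uR m n) u v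

/-- Condition (WI 2c). -/
def WI2c (m n : ℕ) (u v : List A) : Prop :=
  ∀ r r', uR m n r → uR (m-1) (n-1) r' →
    Condensed u r → Condensed v r → Condensed u r' → Condensed v r' →
    compare (pos u r) (pos u r') = compare (pos v r) (pos v r')

/-- Condition (WI 3c). -/
def WI3c (m n : ℕ) (u v : List A) : Prop :=
  ∀ r r', uR m n r → uR m (n-1) r' →
    ((endsX r ∧ endsY r') ∨ (endsY r ∧ endsX r')) →
    Condensed u r → Condensed v r → Condensed u r' → Condensed v r' →
    compare (pos u r) (pos u r') = compare (pos v r) (pos v r')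


set_option linter.unusedSectionVars false

/-! ### Auxiliary model on integer positions -/

def Nx (w : ℤ → Option A) (a : A) (q p : ℤ) : Prop :=
  q < p ∧ w p = some a ∧ ∀ x, q < x → x < p → w x ≠ some a

def Pv (w : ℤ → Option A) (a : A) (q p : ℤ) : Prop :=
  p < q ∧ w p = some a ∧ ∀ x, x < q → p < x → w x ≠ some a

def HX : List (RLetter A) → Prop
  | .X _ :: _ => True
  | _ => False

def HY : List (RLetter A) → Prop
  | .Y _ :: _ => True
  | _ => False

def CC (w : ℤ → Option A) : ℤ → ℤ → List (RLetter A) → Prop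
  | _, _, [] => True
  | i, j, .X a :: t => ∃ p, Nx w a i p ∧ p < j ∧ (HX t → CC w p j t) ∧ (HY t → CC w i p t)
  | i, j, .Y a :: t => ∃ p, Pv w a j p ∧ i < p ∧ (HX t → CC w p j t) ∧ (HY t → CC w i p t)

def DD (w : ℤ → Option A) (i j : ℤ) : ℤ → List (RLetter A) → Prop
  | _, [] => True
  | q, .X a :: t => ∃ p, Nx w a q p ∧ p < j ∧ DD w i j p t
  | q, .Y a :: t => ∃ p, Pv w a q p ∧ i < p ∧ DD w i j p t

theorem Nx_unique {w : ℤ → Option A} {a : A} {q p p' : ℤ} (h : Nx w a q p) (h' : Nx w a q p') :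
    p = p' := by
  obtain ⟨h1, h2, h3⟩ := h
  obtain ⟨h1', h2', h3'⟩ := h'
  rcases lt_trichotomy p p' with h | h | h
  · exact absurd h2 (h3' p h1 h)
  · exact h
  · exact absurd h2' (h3 p' h1' h)

theorem Pv_unique {w : ℤ → Option A} {a : A} {q p p' : ℤ} (h : Pv w a q p) (h' : Pv w a q p') :
    p = p' := by
  obtain ⟨h1, h2, h3⟩ := h
  obtain ⟨h1', h2', h3'⟩ := h'
  rcases lt_trichotomy p p' with h | h | h
  · exact absurd h2' (h3 p' h1' h)
  · exact h
  · exact absurd h2 (h3' p h1 h)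

def ng (w : ℤ → Option A) : ℤ → Option A := fun x => w (-x)

def fl : RLetter A → RLetter A
  | .X a => .Y a
  | .Y a => .X a

theorem Nx_ng {w : ℤ → Option A} {a : A} {q p : ℤ} : Nx (ng w) a (-q) (-p) ↔ Pv w a q p := by
  simp only [Nx, Pv, ng, neg_neg, neg_lt_neg_iff]
  refine and_congr_right fun _ => and_congr_right fun _ => ?_
  constructor
  · intro h x h1 h2
    have := h (-x) (by omega) (by omega)
    simpa using this
  · intro h x h1 h2
    exact h (-x) (by omega) (by omega)

theorem Pv_ng {w : ℤ → Option A} {a : A} {q p : ℤ} : Pv (ng w) a (-q) (-p) ↔ Nx w a q p := by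
  have : Nx (ng (ng w)) a (- -q) (- -p) ↔ Pv (ng w) a (-q) (-p) := Nx_ng
  rw [← this]
  have h : ng (ng w) = w := by funext x; simp [ng]
  rw [h, neg_neg, neg_neg]

theorem HX_fl (r : List (RLetter A)) : HX (r.map fl) ↔ HY r := by
  rcases r with _ | ⟨⟨a⟩ | ⟨a⟩, t⟩ <;> simp [HX, HY, fl]

theorem HY_fl (r : List (RLetter A)) : HY (r.map fl) ↔ HX r := by
  rcases r with _ | ⟨⟨a⟩ | ⟨a⟩, t⟩ <;> simp [HX, HY, fl]

theorem fl_fl (r : List (RLetter A)) : (r.map fl).map fl = r := by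
  induction r with
  | nil => rfl
  | cons z t ih => cases z <;> simp_all [fl]

theorem ex_neg {P : ℤ → Prop} : (∃ p, P p) ↔ ∃ p, P (-p) :=
  ⟨fun ⟨p, h⟩ => ⟨-p, by simpa using h⟩, fun ⟨p, h⟩ => ⟨-p, h⟩⟩

theorem CC_mirror (w : ℤ → Option A) (r : List (RLetter A)) : ∀ i j,
    CC (ng w) (-j) (-i) (r.map fl) ↔ CC w i j r := by
  induction r with
  | nil => intro i j; simp [CC]
  | cons z t ih =>
    intro i j
    cases z with
    | X a =>
      simp only [List.map_cons, fl, CC]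
      rw [ex_neg]
      simp only [Pv_ng, neg_lt_neg_iff, HX_fl, HY_fl, ih]
      exact exists_congr fun p => by tauto
    | Y a =>
      simp only [List.map_cons, fl, CC]
      rw [ex_neg]
      simp only [Nx_ng, neg_lt_neg_iff, HX_fl, HY_fl, ih]
      exact exists_congr fun p => by tauto

theorem DD_mirror (w : ℤ → Option A) (i j : ℤ) (r : List (RLetter A)) : ∀ q,
    DD (ng w) (-j) (-i) (-q) (r.map fl) ↔ DD w i j q r := by
  induction r with
  | nil => intro q; simp [DD]
  | cons z t ih =>
    intro q
    cases z with
    | X a =>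
      simp only [List.map_cons, fl, DD]
      rw [ex_neg]
      simp only [Pv_ng, neg_lt_neg_iff, ih]
    | Y a =>
      simp only [List.map_cons, fl, DD]
      rw [ex_neg]
      simp only [Nx_ng, neg_lt_neg_iff, ih]

/-! ### blocks -/

theorem sameDir_fl (z y : RLetter A) : sameDir (fl z) (fl y) = sameDir z y := by
  cases z <;> cases y <;> rfl

theorem bl_fl (r : List (RLetter A)) : numBlocks (r.map fl) = numBlocks r := by
  induction r with
  | nil => rfl
  | cons z t ih =>
    cases t with
    | nil => rfl
    | cons y t => simp only [List.map_cons, numBlocks, sameDir_fl] at *; rw [ih]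

theorem bl_tail (z : RLetter A) (t : List (RLetter A)) : numBlocks t ≤ numBlocks (z :: t) := by
  cases t with
  | nil => simp [numBlocks]
  | cons y t => simp [numBlocks]

theorem bl_pos (z : RLetter A) (t : List (RLetter A)) : 1 ≤ numBlocks (z :: t) := by
  induction t generalizing z with
  | nil => simp [numBlocks]
  | cons y t ih => simp only [numBlocks]; have := ih y; omega

theorem bl_suffix (x t : List (RLetter A)) : numBlocks t ≤ numBlocks (x ++ t) := by
  induction x with
  | nil => simp
  | cons z x ih => exact ih.trans (bl_tail _ _)

theorem bl_prefix (x t : List (RLetter A)) : numBlocks x ≤ numBlocks (x ++ t) := by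
  induction x with
  | nil => simp [numBlocks]
  | cons z x ih =>
    cases x with
    | nil => simpa [numBlocks] using bl_pos z t
    | cons y x => simp only [List.cons_append, numBlocks] at *; omega

theorem bl_XY (x : List (RLetter A)) (hx : HX x) (c : A) (t : List (RLetter A)) :
    numBlocks (.Y c :: t) + 1 ≤ numBlocks (x ++ .Y c :: t) := by
  induction x with
  | nil => simp [HX] at hx
  | cons z x ih =>
    cases z with
    | Y a => simp [HX] at hx
    | X a =>
      rcases x with _ | ⟨⟨b⟩ | ⟨b⟩, x⟩
      · simp only [List.cons_append, List.nil_append, numBlocks, sameDir]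
        simp; try omega
      · exact (ih (by simp [HX])).trans (bl_tail _ _)
      · have := bl_suffix (RLetter.Y b :: x) (RLetter.Y c :: t)
        simp only [List.cons_append, numBlocks, sameDir] at *
        simp; try omega

theorem bl_consX (a : A) (r : List (RLetter A)) (h : HX r) :
    numBlocks (.X a :: r) = numBlocks r := by
  rcases r with _ | ⟨⟨b⟩ | ⟨b⟩, x⟩ <;> simp_all [HX, numBlocks, sameDir]

theorem bl_consXY (a : A) (r : List (RLetter A)) (h : HY r) :
    numBlocks (.X a :: r) = numBlocks r + 1 := by
  rcases r with _ | ⟨⟨b⟩ | ⟨b⟩, x⟩ <;> simp_all [HY, numBlocks, sameDir]; omega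

theorem bl_allY (s : List A) (hs : s ≠ []) : numBlocks (s.map RLetter.Y) = 1 := by
  induction s with
  | nil => simp at hs
  | cons a s ih =>
    cases s with
    | nil => rfl
    | cons b s => simp only [List.map_cons, numBlocks, sameDir] at *; simp [ih]

theorem decompY (r : List (RLetter A)) :
    ∃ (s : List A) (t : List (RLetter A)), r = s.map RLetter.Y ++ t ∧ ¬ HY t := by
  induction r with
  | nil => exact ⟨[], [], rfl, by simp [HY]⟩
  | cons z r ih =>
    cases z with
    | X a => exact ⟨[], _, rfl, by simp [HY]⟩
    | Y a =>
      obtain ⟨s, t, h, h'⟩ := ih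
      exact ⟨a :: s, t, by simp [h], h'⟩

theorem decompX (r : List (RLetter A)) :
    ∃ (s : List A) (t : List (RLetter A)), r = s.map RLetter.X ++ t ∧ ¬ HX t := by
  induction r with
  | nil => exact ⟨[], [], rfl, by simp [HX]⟩
  | cons z r ih =>
    cases z with
    | Y a => exact ⟨[], _, rfl, by simp [HX]⟩
    | X a =>
      obtain ⟨s, t, h, h'⟩ := ih
      exact ⟨a :: s, t, by simp [h], h'⟩

/-! ### condensed rankers in intervals -/

theorem exists_Nx {w : ℤ → Option A} {a : A} {q x : ℤ} (h : q < x) (hx : w x = some a) :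
    ∃ p, Nx w a q p ∧ p ≤ x := by
  classical
  obtain ⟨p, ⟨h1, h2⟩, h3⟩ := Int.exists_least_of_bdd (P := fun y => q < y ∧ w y = some a)
    ⟨q, fun z hz => hz.1.le⟩ ⟨x, h, hx⟩
  exact ⟨p, ⟨h1, h2, fun y hy hy' hw => by have := h3 y ⟨hy, hw⟩; omega⟩, h3 x ⟨h, hx⟩⟩

theorem exists_Pv {w : ℤ → Option A} {a : A} {q x : ℤ} (h : x < q) (hx : w x = some a) :
    ∃ p, Pv w a q p ∧ x ≤ p := by
  obtain ⟨p, h1, h2⟩ := exists_Nx (w := ng w) (a := a) (q := -q) (x := -x) (by omega)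
    (by simpa [ng] using hx)
  refine ⟨-p, ?_, by omega⟩
  rw [← Nx_ng]; simpa using h1

theorem CC_prefix (w : ℤ → Option A) (x t : List (RLetter A)) : ∀ i j,
    CC w i j (x ++ t) → CC w i j x := by
  induction x with
  | nil => intros; trivial
  | cons z x ih =>
    intro i j h
    have hX : HX x → HX (x ++ t) := by
      rcases x with _ | ⟨⟨b⟩ | ⟨b⟩, x⟩ <;> simp [HX]
    have hY : HY x → HY (x ++ t) := by
      rcases x with _ | ⟨⟨b⟩ | ⟨b⟩, x⟩ <;> simp [HY]
    cases z with
    | X a =>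
      obtain ⟨p, h1, h2, h3, h4⟩ := h
      exact ⟨p, h1, h2, fun h => ih _ _ (h3 (hX h)), fun h => ih _ _ (h4 (hY h))⟩
    | Y a =>
      obtain ⟨p, h1, h2, h3, h4⟩ := h
      exact ⟨p, h1, h2, fun h => ih _ _ (h3 (hX h)), fun h => ih _ _ (h4 (hY h))⟩

theorem CC_monoY (w : ℤ → Option A) (r : List (RLetter A)) : ∀ i p j, HY r → i ≤ p →
    CC w p j r → CC w i j r := by
  induction r with
  | nil => intros; trivial
  | cons z t ih =>
    intro i p j h hip hc
    cases z with
    | X a => simp [HY] at h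
    | Y a =>
      obtain ⟨q, h1, h2, h3, h4⟩ := hc
      exact ⟨q, h1, by omega, h3, fun h => ih _ _ _ h hip (h4 h)⟩

theorem CC_monoX (w : ℤ → Option A) (r : List (RLetter A)) : ∀ i p j, HX r → p ≤ j →
    CC w i p r → CC w i j r := by
  intro i p j h h1 h2
  rw [← CC_mirror] at h2 ⊢
  exact CC_monoY _ _ _ _ _ ((HY_fl r).2 h) (by omega) h2

theorem glueY (w : ℤ → Option A) (s : List A) (t : List (RLetter A)) (hs : s ≠ []) (ht : ¬ HY t) :
    ∀ i p j, CC w p j (s.map RLetter.Y) → CC w i j (s.map RLetter.Y ++ t) →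
      CC w p j (s.map RLetter.Y ++ t) := by
  induction s with
  | nil => simp at hs
  | cons b s ih =>
    intro i p j h1 h2
    obtain ⟨q, h3, h4, h5, h6⟩ := h1
    obtain ⟨q', h3', h4', h5', h6'⟩ := h2
    cases Pv_unique h3 h3'
    refine ⟨q, h3, h4, h5', ?_⟩
    cases s with
    | nil => exact fun h => absurd h ht
    | cons c s => exact fun h => ih (by simp) _ _ _ (h6 trivial) (h6' h)

theorem map_fl_X (s : List A) : (s.map RLetter.X).map fl = s.map RLetter.Y := by
  simp [Function.comp_def, fl]

theorem glueX (w : ℤ → Option A) (s : List A) (t : List (RLetter A)) (hs : s ≠ []) (ht : ¬ HX t) :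
    ∀ i p j, CC w i p (s.map RLetter.X) → CC w i j (s.map RLetter.X ++ t) →
      CC w i p (s.map RLetter.X ++ t) := by
  intro i p j h1 h2
  rw [← CC_mirror] at h1 h2 ⊢
  rw [List.map_append] at h2 ⊢
  rw [map_fl_X] at *
  exact glueY _ _ _ hs (by rwa [HY_fl]) _ _ _ h1 h2

theorem h1Y (w : ℤ → Option A) (s : List A) (a : A) : ∀ i p j, i < p → w p = some a → p < j →
    CC w p j (s.map RLetter.Y) → CC w i j ((s ++ [a]).map RLetter.Y) := by
  induction s with
  | nil =>
    intro i p j hip hp hpj _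
    obtain ⟨q, hq, hq'⟩ := exists_Pv hpj hp
    exact ⟨q, hq, by omega, by simp [HX], by simp [HY]⟩
  | cons b s ih =>
    intro i p j hip hp hpj h
    obtain ⟨q, h1, h2, h3, h4⟩ := h
    refine ⟨q, h1, by omega, ?_, fun _ => ih _ _ _ hip hp h2 ?_⟩
    · intro h; cases s <;> simp [HX] at h
    · cases s with
      | nil => trivial
      | cons c s => exact h4 trivial

theorem h2Y (w : ℤ → Option A) (s : List A) (a : A) : ∀ i j,
    CC w i j ((s ++ [a]).map RLetter.Y) →
    ∃ p, Nx w a i p ∧ p < j ∧ CC w p j (s.map RLetter.Y) := by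
  induction s with
  | nil =>
    intro i j h
    obtain ⟨q, h1, h2, _⟩ := h
    obtain ⟨p, h3, h4⟩ := exists_Nx h2 h1.2.1
    exact ⟨p, h3, by have := h1.1; omega, trivial⟩
  | cons b s ih =>
    intro i j h
    obtain ⟨q, h1, h2, h3, h4⟩ := h
    obtain ⟨p, h5, h6, h7⟩ := ih i q (h4 (by cases s <;> trivial))
    refine ⟨p, h5, by have := h1.1; omega, q, h1, h6, ?_, fun _ => h7⟩
    intro h; cases s <;> simp [HX] at h

theorem XY_rev (w : ℤ → Option A) (s : List A) : ∀ i j,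
    CC w i j (s.map RLetter.X) ↔ CC w i j (s.reverse.map RLetter.Y) := by
  induction s with
  | nil => intro i j; simp
  | cons a s ih =>
    intro i j
    rw [List.reverse_cons]
    constructor
    · rintro ⟨p, h1, h2, h3, h4⟩
      refine h1Y w _ a i p j h1.1 h1.2.1 h2 ?_
      rw [← ih]
      cases s with
      | nil => trivial
      | cons b s => exact h3 trivial
    · intro h
      obtain ⟨p, h1, h2, h3⟩ := h2Y w _ a i j h
      refine ⟨p, h1, h2, fun _ => (ih _ _).2 h3, ?_⟩
      intro h; cases s <;> simp [HY] at h

/-! ### agreement -/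

def PX (m n : ℕ) (r : List (RLetter A)) : Prop :=
  (HX r ∧ numBlocks r ≤ m ∧ r.length ≤ n) ∨ (HY r ∧ numBlocks r < m ∧ r.length < n)

def PY (m n : ℕ) (r : List (RLetter A)) : Prop :=
  (HY r ∧ numBlocks r ≤ m ∧ r.length ≤ n) ∨ (HX r ∧ numBlocks r < m ∧ r.length < n)

theorem CC_consX_HX {w : ℤ → Option A} {a : A} {i j p : ℤ} (hp : Nx w a i p) (hj : p < j)
    (r : List (RLetter A)) (hr : HX r) : CC w i j (.X a :: r) ↔ CC w p j r := by
  have hn : ¬ HY r := by rcases r with _ | ⟨⟨b⟩ | ⟨b⟩, x⟩ <;> simp_all [HX, HY]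
  constructor
  · rintro ⟨q, h1, h2, h3, _⟩
    cases Nx_unique h1 hp
    exact h3 hr
  · exact fun h => ⟨p, hp, hj, fun _ => h, fun h => absurd h hn⟩

theorem CC_consX_HY {w : ℤ → Option A} {a : A} {i j p : ℤ} (hp : Nx w a i p) (hj : p < j)
    (r : List (RLetter A)) (hr : HY r) : CC w i j (.X a :: r) ↔ CC w i p r := by
  have hn : ¬ HX r := by rcases r with _ | ⟨⟨b⟩ | ⟨b⟩, x⟩ <;> simp_all [HX, HY]
  constructor
  · rintro ⟨q, h1, h2, _, h3⟩
    cases Nx_unique h1 hp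
    exact h3 hr
  · exact fun h => ⟨p, hp, hj, fun h => absurd h hn, fun _ => h⟩

theorem A1 (m n : ℕ) (w w' : ℤ → Option A) (i j p i' j' p' : ℤ) (a : A)
    (hp : Nx w a i p) (hj : p < j) (hp' : Nx w' a i' p') (hj' : p' < j')
    (h : ∀ r, PX m (n+1) r → CC w i j r → CC w' i' j' r) :
    ∀ r, PX m n r → CC w p j r → CC w' p' j' r := by
  intro r hr hc
  rcases hr with ⟨h1, h2, h3⟩ | ⟨h1, h2, h3⟩
  · rw [← CC_consX_HX hp' hj' r h1]
    rw [← CC_consX_HX hp hj r h1] at hc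
    refine h _ (Or.inl ⟨trivial, ?_, by simpa using h3⟩) hc
    rwa [bl_consX _ _ h1]
  · have hc' := h r (Or.inr ⟨h1, h2, by omega⟩) (CC_monoY _ _ _ _ _ h1 hp.1.le hc)
    obtain ⟨s, t, rfl, ht⟩ := decompY r
    have hs : s ≠ [] := by rintro rfl; exact ht h1
    have e1 := h1Y w s a i p j hp.1 hp.2.1 hj (CC_prefix _ _ _ _ _ hc)
    have e2 := h _ (Or.inr ⟨by cases s <;> trivial, by
      rw [bl_allY _ (by simp)]
      have := bl_prefix (s.map RLetter.Y) t
      rw [bl_allY s hs] at this; omega, by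
      simp at h3 ⊢; omega⟩) e1
    obtain ⟨q, f1, f2, f3⟩ := h2Y _ _ _ _ _ e2
    cases Nx_unique f1 hp'
    exact glueY _ _ _ hs ht _ _ _ f3 hc'

theorem A2 (m n : ℕ) (w w' : ℤ → Option A) (i j p i' j' p' : ℤ) (a : A)
    (hp : Nx w a i p) (hj : p < j) (hp' : Nx w' a i' p') (hj' : p' < j')
    (h : ∀ r, PX (m+1) (n+1) r → CC w i j r → CC w' i' j' r) :
    ∀ r, PY m n r → CC w i p r → CC w' i' p' r := by
  intro r hr hc
  rcases hr with ⟨h1, h2, h3⟩ | ⟨h1, h2, h3⟩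
  · rw [← CC_consX_HY hp' hj' r h1]
    rw [← CC_consX_HY hp hj r h1] at hc
    refine h _ (Or.inl ⟨trivial, ?_, by simpa using h3⟩) hc
    rw [bl_consXY _ _ h1]; omega
  · have hc' := h r (Or.inl ⟨h1, by omega, by omega⟩) (CC_monoX _ _ _ _ _ h1 hj.le hc)
    obtain ⟨s, t, rfl, ht⟩ := decompX r
    have hs : s ≠ [] := by rintro rfl; exact ht h1
    have hY : HY (s.reverse.map RLetter.Y) := by
      rcases hh : s.reverse with _ | ⟨b, s'⟩
      · simp at hh; exact absurd hh hs
      · trivial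
    have e1 := (XY_rev _ _ _ _).1 (CC_prefix _ _ _ _ _ hc)
    rw [← CC_consX_HY hp hj _ hY] at e1
    have e2 := h (RLetter.X a :: s.reverse.map RLetter.Y) (Or.inl ⟨trivial, by
      rw [bl_consXY _ _ hY, bl_allY _ (by simpa using hs)]
      have := bl_prefix (s.map RLetter.X) t
      have h7 := bl_allY s hs
      rw [← map_fl_X, bl_fl] at h7
      omega, by
      simp at h3 ⊢; omega⟩) e1
    rw [CC_consX_HY hp' hj' _ hY, ← XY_rev] at e2
    exact glueX _ _ _ hs ht _ _ _ e2 hc'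

/-! ### evaluation across a split point -/

theorem DD_prefix (w : ℤ → Option A) (i j : ℤ) (x t : List (RLetter A)) : ∀ q,
    DD w i j q (x ++ t) → DD w i j q x := by
  induction x with
  | nil => intros; trivial
  | cons z x ih =>
    intro q h
    cases z with
    | X a => obtain ⟨p, h1, h2, h3⟩ := h; exact ⟨p, h1, h2, ih _ h3⟩
    | Y a => obtain ⟨p, h1, h2, h3⟩ := h; exact ⟨p, h1, h2, ih _ h3⟩

theorem DD_mono (w : ℤ → Option A) (i p j : ℤ) (hip : i ≤ p) (x : List (RLetter A)) : ∀ q,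
    DD w p j q x → DD w i j q x := by
  induction x with
  | nil => intros; trivial
  | cons z x ih =>
    intro q h
    cases z with
    | X a => obtain ⟨p, h1, h2, h3⟩ := h; exact ⟨p, h1, h2, ih _ h3⟩
    | Y a => obtain ⟨p, h1, h2, h3⟩ := h; exact ⟨p, h1, by omega, ih _ h3⟩

theorem DD_X_iff {w : ℤ → Option A} {i j q p : ℤ} {a : A} (h : Nx w a q p) (hj : p < j)
    (t : List (RLetter A)) : DD w i j q (.X a :: t) ↔ DD w i j p t := by
  constructor
  · rintro ⟨p', h1, h2, h3⟩
    cases Nx_unique h h1; exact h3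
  · exact fun h3 => ⟨p, h, hj, h3⟩

theorem DD_Y_iff {w : ℤ → Option A} {i j q p : ℤ} {a : A} (h : Pv w a q p) (hj : i < p)
    (t : List (RLetter A)) : DD w i j q (.Y a :: t) ↔ DD w i j p t := by
  constructor
  · rintro ⟨p', h1, h2, h3⟩
    cases Pv_unique h h1; exact h3
  · exact fun h3 => ⟨p, h, hj, h3⟩

theorem first_exit (P : List (RLetter A) → Prop) (h0 : P []) (s : List (RLetter A)) (hs : ¬ P s) :
    ∃ x z t, s = x ++ z :: t ∧ P x ∧ ¬ P (x ++ [z]) := by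
  induction s using List.reverseRecOn with
  | nil => exact absurd h0 hs
  | append_singleton s z ih =>
    by_cases h : P s
    · exact ⟨s, z, [], rfl, h, hs⟩
    · obtain ⟨x, y, t, h1, h2, h3⟩ := ih h
      exact ⟨x, y, t ++ [z], by simp [h1], h2, h3⟩

theorem exitX (w : ℤ → Option A) (i p j : ℤ) (hip : i ≤ p) (c : A) (x t : List (RLetter A)) : ∀ q,
    DD w p j q x → ¬ DD w p j q (x ++ [.X c]) → ¬ DD w i j q (x ++ .X c :: t) := by
  induction x with
  | nil =>
    rintro q _ h ⟨p', h1, h2, _⟩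
    exact h ⟨p', h1, h2, trivial⟩
  | cons z x ih =>
    intro q h h'
    cases z with
    | X a =>
      obtain ⟨p', h1, h2, h3⟩ := h
      rw [List.cons_append, DD_X_iff h1 h2] at h' ⊢
      exact ih _ h3 h'
    | Y a =>
      obtain ⟨p', h1, h2, h3⟩ := h
      rw [List.cons_append, DD_Y_iff h1 (by omega)] at h' ⊢
      exact ih _ h3 h'

theorem exitY (w : ℤ → Option A) (i p j : ℤ) (hip : i < p) (a : A) (hp : w p = some a)
    (c : A) (x t : List (RLetter A)) : ∀ q, p < q →
    DD w p j q x → ¬ DD w p j q (x ++ [.Y c]) →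
    (DD w i j q (x ++ .Y c :: t) ↔ DD w i j p (if c = a then t else .Y c :: t)) := by
  induction x with
  | nil =>
    intro q hq _ h
    have hno : ∀ y, p < y → y < q → w y ≠ some c := by
      intro y h1 h2 h3
      obtain ⟨y', h4, h5⟩ := exists_Pv h2 h3
      exact h ⟨y', h4, by omega, trivial⟩
    rw [List.nil_append]
    split_ifs with hc
    · subst hc
      exact DD_Y_iff ⟨hq, hp, fun y h1 h2 => hno y h2 h1⟩ hip t
    · simp only [DD]
      refine exists_congr fun y => and_congr_left fun _ => ?_
      constructor
      · rintro ⟨h1, h2, h3⟩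
        refine ⟨?_, h2, fun z h4 h5 => h3 z (by omega) h5⟩
        by_contra hy
        rcases eq_or_lt_of_le (not_lt.1 hy) with h6 | h6
        · subst h6; rw [hp] at h2; exact hc (Option.some.inj h2).symm
        · exact hno y h6 h1 h2
      · rintro ⟨h1, h2, h3⟩
        refine ⟨by omega, h2, fun z h4 h5 h6 => ?_⟩
        rcases lt_trichotomy z p with h7 | h7 | h7
        · exact h3 z h7 h5 h6
        · subst h7; rw [hp] at h6; exact hc (Option.some.inj h6).symm
        · exact hno z h7 h4 h6
  | cons z x ih =>
    intro q hq h h'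
    cases z with
    | X b =>
      obtain ⟨p', h1, h2, h3⟩ := h
      rw [List.cons_append, DD_X_iff h1 h2] at h' ⊢
      exact ih _ (by have := h1.1; omega) h3 h'
    | Y b =>
      obtain ⟨p', h1, h2, h3⟩ := h
      rw [List.cons_append, DD_Y_iff h1 (by omega)] at h' ⊢
      exact ih _ h2 h3 h'

def Cl (M1 M2 N : ℕ) (s : List (RLetter A)) : Prop :=
  s.length ≤ N ∧ (HX s → numBlocks s ≤ M1) ∧ (HY s → numBlocks s ≤ M2)

theorem halfstep (M1 M2 N : ℕ) (hM : M1 ≤ M2 + 1) (a : A) (w w' : ℤ → Option A)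
    (i p j i' p' j' : ℤ)
    (hi : i < p) (hi' : i' < p') (hw : w p = some a) (hw' : w' p' = some a)
    (hD : ∀ r, HX r → numBlocks r ≤ M1 → r.length ≤ N → (DD w p j p r ↔ DD w' p' j' p' r))
    (s : List (RLetter A)) (hs : HX s) (hcl : Cl M1 M2 N s)
    (ih : ∀ t : List (RLetter A), t.length < s.length → Cl M1 M2 N t →
      (DD w i j p t ↔ DD w' i' j' p' t)) :
    DD w i j p s ↔ DD w' i' j' p' s := by
  obtain ⟨hl, hb, -⟩ := hcl
  replace hb := hb hs
  have key := hD s hs hb hl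
  by_cases h : DD w p j p s
  · exact iff_of_true (DD_mono _ _ _ _ hi.le _ _ h) (DD_mono _ _ _ _ hi'.le _ _ (key.1 h))
  obtain ⟨x, z, t, rfl, h1, h2⟩ := first_exit (DD w p j p) trivial s h
  have hsz : HX (x ++ [z]) := by
    rcases x with _ | ⟨⟨b⟩ | ⟨b⟩, x⟩
    · cases z <;> simp_all [HX]
    · trivial
    · exact hs
  have hbz : numBlocks (x ++ [z]) ≤ numBlocks (x ++ z :: t) := by
    have := bl_prefix (x ++ [z]) t
    simpa using this
  have h2' : ¬ DD w' p' j' p' (x ++ [z]) := by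
    rwa [← hD _ hsz (by omega) (by simp at hl ⊢; omega)]
  have h1' : DD w' p' j' p' x := by
    rcases x with _ | ⟨y, x⟩
    · trivial
    · have hx : HX (y :: x) := by cases y; trivial; exact hs
      rwa [← hD _ hx ((bl_prefix _ _).trans hb) (by simp at hl ⊢; omega)]
  cases z with
  | X c => exact iff_of_false (exitX _ _ _ _ hi.le _ _ _ _ h1 h2) (exitX _ _ _ _ hi'.le _ _ _ _ h1' h2')
  | Y c =>
    rcases x with _ | ⟨⟨b⟩ | ⟨b⟩, x⟩
    · simp [HX] at hs
    · obtain ⟨q, e1, e2, e3⟩ := h1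
      obtain ⟨q', e1', e2', e3'⟩ := h1'
      have hblk := bl_XY (.X b :: x) trivial c t
      rw [List.cons_append, DD_X_iff e1 e2] at h2 ⊢
      rw [List.cons_append, DD_X_iff e1' e2'] at h2' 
      rw [DD_X_iff e1' e2']
      rw [exitY w i p j hi a hw c x t q e1.1 e3 h2, exitY w' i' p' j' hi' a hw' c x t q' e1'.1 e3' h2']
      apply ih
      · split_ifs <;> simp <;> omega
      · have hbt := bl_tail (RLetter.Y c) t
        simp at hl
        split_ifs
        · exact ⟨by omega, fun _ => by omega, fun _ => by omega⟩
        · exact ⟨by simp; omega, fun h => by simp [HX] at h, fun _ => by omega⟩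
    · simp [HX] at hs

theorem lemG (M1 M2 N : ℕ) (hM : M1 ≤ M2 + 1) (hM' : M2 ≤ M1 + 1) (a : A) (w w' : ℤ → Option A)
    (i p j i' p' j' : ℤ)
    (hi : i < p) (hi' : i' < p') (hj : p < j) (hj' : p' < j')
    (hw : w p = some a) (hw' : w' p' = some a)
    (hD : ∀ r, HX r → numBlocks r ≤ M1 → r.length ≤ N → (DD w p j p r ↔ DD w' p' j' p' r))
    (hD' : ∀ r, HY r → numBlocks r ≤ M2 → r.length ≤ N → (DD w i p p r ↔ DD w' i' p' p' r)) :
    ∀ k, ∀ s : List (RLetter A), s.length ≤ k → Cl M1 M2 N s →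
      (DD w i j p s ↔ DD w' i' j' p' s) := by
  intro k
  induction k with
  | zero =>
    intro s hs _
    have : s = [] := by simpa using hs
    subst this; simp [DD]
  | succ k ih =>
    intro s hs hcl
    by_cases hX : HX s
    · exact halfstep M1 M2 N hM a w w' i p j i' p' j' hi hi' hw hw' hD s hX hcl
        (fun t ht hc => ih t (by omega) hc)
    by_cases hY : HY s
    · rw [← DD_mirror w, ← DD_mirror w']
      refine halfstep M2 M1 N hM' a (ng w) (ng w') (-j) (-p) (-i) (-j') (-p') (-i')
        (by omega) (by omega) (by simpa [ng] using hw) (by simpa [ng] using hw') ?_ (s.map fl)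
        ((HX_fl s).2 hY) ?_ ?_
      · intro r h1 h2 h3
        rw [← fl_fl r, DD_mirror, DD_mirror]
        exact hD' _ ((HY_fl r).2 h1) (by rwa [bl_fl]) (by simpa using h3)
      · simpa [Cl, HX_fl, HY_fl, bl_fl, and_comm] using hcl
      · intro t ht hc
        rw [← fl_fl t, DD_mirror, DD_mirror]
        refine ih _ (by simp at ht ⊢; omega) ?_
        simpa [Cl, HX_fl, HY_fl, bl_fl, and_comm] using hc
    · have : s = [] := by rcases s with _ | ⟨⟨b⟩ | ⟨b⟩, x⟩ <;> simp_all [HX, HY]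
      subst this; simp [DD]

theorem mainX : ∀ (n m : ℕ) (w w' : ℤ → Option A) (i j i' j' : ℤ),
    (∀ r, PX m n r → (CC w i j r ↔ CC w' i' j' r)) →
    (∀ r, HX r → numBlocks r ≤ m → r.length ≤ n → (DD w i j i r ↔ DD w' i' j' i' r)) ∧
    (∀ r, HY r → numBlocks r < m → r.length < n → (DD w i j j r ↔ DD w' i' j' j' r)) := by
  intro n
  induction n with
  | zero =>
    intro m w w' i j i' j' _
    refine ⟨?_, fun r _ _ h => by omega⟩
    intro r h1 _ h2
    have : r = [] := by simpa using h2
    subst this; simp [HX] at h1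
  | succ n ih =>
    have ihY : ∀ (m : ℕ) (w w' : ℤ → Option A) (i j i' j' : ℤ),
        (∀ r, PY m n r → (CC w i j r ↔ CC w' i' j' r)) →
        (∀ r, HY r → numBlocks r ≤ m → r.length ≤ n → (DD w i j j r ↔ DD w' i' j' j' r)) := by
      intro m w w' i j i' j' h r h1 h2 h3
      rw [← DD_mirror w, ← DD_mirror w']
      refine (ih m (ng w) (ng w') (-j) (-i) (-j') (-i') ?_).1 _ ((HX_fl r).2 h1) (by rwa [bl_fl])
        (by simpa using h3)
      intro t ht
      rw [← fl_fl t, CC_mirror, CC_mirror]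
      apply h
      simpa [PX, PY, HX_fl, HY_fl, bl_fl] using ht
    intro m w w' i j i' j' h
    constructor
    · intro r h1 h2 h3
      rcases r with _ | ⟨⟨a⟩ | ⟨a⟩, s⟩
      · simp [HX] at h1
      · have hb := bl_pos (RLetter.X a) s
        obtain ⟨m, rfl⟩ : ∃ m', m = m' + 1 := ⟨m - 1, by omega⟩
        have ha := h [.X a] (Or.inl ⟨trivial, by simp [numBlocks], by simp⟩)
        by_cases hc : CC w i j [.X a]
        · have hc' := ha.1 hc
          obtain ⟨p, hp, hj, -⟩ := hc
          obtain ⟨p', hp', hj', -⟩ := hc'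
          rw [DD_X_iff hp hj, DD_X_iff hp' hj']
          have k1 := (ih (m+1) w w' p j p' j' fun r hr =>
            ⟨A1 (m+1) n w w' i j p i' j' p' a hp hj hp' hj' (fun r hr => (h r hr).1) r hr,
             A1 (m+1) n w' w i' j' p' i j p a hp' hj' hp hj (fun r hr => (h r hr).2) r hr⟩).1
          have k2 := ihY m w w' i p i' p' fun r hr =>
            ⟨A2 m n w w' i j p i' j' p' a hp hj hp' hj' (fun r hr => (h r hr).1) r hr,
             A2 m n w' w i' j' p' i j p a hp' hj' hp hj (fun r hr => (h r hr).2) r hr⟩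
          refine lemG (m+1) m n (by omega) (by omega) a w w' i p j i' p' j' hp.1 hp'.1 hj hj'
            hp.2.1 hp'.2.1 k1 k2 s.length s le_rfl ⟨by simpa using h3, fun hs => ?_, fun hs => ?_⟩
          · rwa [bl_consX _ _ hs] at h2
          · rw [bl_consXY _ _ hs] at h2; omega
        · have hc' := hc
          rw [ha] at hc'
          refine iff_of_false ?_ ?_
          · rintro ⟨p, hp, hj, -⟩
            exact hc ⟨p, hp, hj, by simp [HX], by simp [HY]⟩
          · rintro ⟨p, hp, hj, -⟩
            exact hc' ⟨p, hp, hj, by simp [HX], by simp [HY]⟩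
      · simp [HX] at h1
    · intro r h1 h2 h3
      refine ihY (m-1) w w' i j i' j' (fun t ht => h t ?_) r h1 (by omega) (by omega)
      rcases ht with ⟨g1, g2, g3⟩ | ⟨g1, g2, g3⟩
      · refine Or.inr ⟨g1, ?_, by omega⟩
        have : 0 < m := by omega
        omega
      · exact Or.inl ⟨g1, by omega, by omega⟩

theorem mainAll (m n : ℕ) (w w' : ℤ → Option A) (i j i' j' : ℤ)
    (h : ∀ r, PX m n r → (CC w i j r ↔ CC w' i' j' r)) :
    ∀ r, PX m n r → (HX r → (DD w i j i r ↔ DD w' i' j' i' r)) ∧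
      (HY r → (DD w i j j r ↔ DD w' i' j' j' r)) := by
  obtain ⟨h1, h2⟩ := mainX n m w w' i j i' j' h
  intro r hr
  have hn : ¬ (HX r ∧ HY r) := by rcases r with _ | ⟨⟨b⟩ | ⟨b⟩, x⟩ <;> simp_all [HX, HY]
  rcases hr with ⟨g1, g2, g3⟩ | ⟨g1, g2, g3⟩
  · exact ⟨fun _ => h1 r g1 g2 g3, fun g => absurd ⟨g1, g⟩ hn⟩
  · exact ⟨fun g => absurd ⟨g, g1⟩ hn, fun _ => h2 r g1 g2 g3⟩

theorem mainAllY (m n : ℕ) (w w' : ℤ → Option A) (i j i' j' : ℤ)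
    (h : ∀ r, PY m n r → (CC w i j r ↔ CC w' i' j' r)) :
    ∀ r, PY m n r → (HX r → (DD w i j i r ↔ DD w' i' j' i' r)) ∧
      (HY r → (DD w i j j r ↔ DD w' i' j' j' r)) := by
  have h' : ∀ r, PX m n r → (CC (ng w) (-j) (-i) r ↔ CC (ng w') (-j') (-i') r) := by
    intro t ht
    rw [← fl_fl t, CC_mirror, CC_mirror]
    apply h
    simpa [PX, PY, HX_fl, HY_fl, bl_fl] using ht
  intro r hr
  have := mainAll m n _ _ _ _ _ _ h' (r.map fl) (by simpa [PX, PY, HX_fl, HY_fl, bl_fl] using hr)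
  rw [DD_mirror, DD_mirror, DD_mirror, DD_mirror, HX_fl, HY_fl] at this
  exact this.symm

/-! ### bridge -/

def wd (u : List A) : ℤ → Option A := fun x => if 1 ≤ x then u[x.toNat - 1]? else none

theorem wd_nat (u : List A) (k : ℕ) (hk : 1 ≤ k) : wd u (k : ℤ) = u[k-1]? := by
  have : (1 : ℤ) ≤ k := by exact_mod_cast hk
  simp [wd, this]

theorem wd_some {u : List A} {x : ℤ} {a : A} (h : wd u x = some a) : 1 ≤ x ∧ x ≤ u.length := by
  unfold wd at h
  split_ifs at h with h1
  refine ⟨h1, ?_⟩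
  have := (List.getElem?_eq_some_iff.1 h).1
  omega

theorem head_filter_range (P : ℕ → Bool) (N p : ℕ) :
    ((List.range N).filter P).head? = some p ↔ p < N ∧ P p ∧ ∀ x < p, ¬ P x := by
  rw [List.head?_filter, List.find?_range_eq_some]
  simp
  tauto

theorem last_filter_range (P : ℕ → Bool) (N p : ℕ) :
    ((List.range N).filter P).getLast? = some p ↔ p < N ∧ P p ∧ ∀ x < N, p < x → ¬ P x := by
  induction N with
  | zero => simp
  | succ N ih =>
    rw [List.range_succ, List.filter_append]
    by_cases h : P N
    · simp only [List.filter_cons, h, List.filter_nil, if_true, List.getLast?_append,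
        List.getLast?_singleton, Option.some_or, Option.some.injEq]
      constructor
      · rintro rfl
        exact ⟨by omega, h, fun x h1 h2 => by omega⟩
      · rintro ⟨h1, h2, h3⟩
        by_contra hne
        exact h3 N (by omega) (by omega) h
    · simp only [List.filter_cons, h, List.filter_nil, List.append_nil]
      simp only [Bool.false_eq_true, if_false, List.append_nil, ih]
      constructor
      · rintro ⟨h1, h2, h3⟩
        refine ⟨by omega, h2, fun x h4 h5 => ?_⟩
        rcases Nat.lt_succ_iff_lt_or_eq.1 h4 with h6 | rfl
        · exact h3 x h6 h5
        · exact h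
      · rintro ⟨h1, h2, h3⟩
        refine ⟨?_, h2, fun x h4 h5 => h3 x (by omega) h5⟩
        rcases Nat.lt_succ_iff_lt_or_eq.1 h1 with h6 | rfl
        · exact h6
        · exact absurd h2 h

theorem next_iff (u : List A) (a : A) (q p : ℕ) :
    nextOcc u a q = some p ↔ Nx (wd u) a q p := by
  unfold nextOcc
  rw [head_filter_range]
  simp only [decide_eq_true_eq, Nx]
  constructor
  · rintro ⟨h1, ⟨h2, h3⟩, h4⟩
    refine ⟨by omega, by rw [wd_nat _ _ (by omega)]; exact h3, ?_⟩
    intro x h5 h6 h7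
    lift x to ℕ using by omega
    rw [wd_nat _ _ (by omega)] at h7
    exact h4 x (by omega) ⟨by omega, h7⟩
  · rintro ⟨h1, h2, h3⟩
    have hb := wd_some h2
    rw [wd_nat _ _ (by omega)] at h2
    refine ⟨by omega, ⟨by omega, h2⟩, ?_⟩
    rintro x h4 ⟨h5, h6⟩
    refine h3 x (by omega) (by omega) ?_
    rw [wd_nat _ _ (by omega)]; exact h6

theorem prev_iff (u : List A) (a : A) (q p : ℕ) :
    prevOcc u a q = some p ↔ Pv (wd u) a q p := by
  unfold prevOcc
  rw [last_filter_range]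
  simp only [decide_eq_true_eq, Pv]
  constructor
  · rintro ⟨h1, ⟨h2, h3, h3'⟩, h4⟩
    refine ⟨by omega, by rw [wd_nat _ _ (by omega)]; exact h3', ?_⟩
    intro x h5 h6 h7
    have hb := wd_some h7
    lift x to ℕ using by omega
    rw [wd_nat _ _ (by omega)] at h7
    exact h4 x (by omega) (by omega) ⟨by omega, by omega, h7⟩
  · rintro ⟨h1, h2, h3⟩
    have hb := wd_some h2
    rw [wd_nat _ _ (by omega)] at h2
    refine ⟨by omega, ⟨by omega, by omega, h2⟩, ?_⟩
    rintro x h4 h4' ⟨h5, h6, h7⟩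
    refine h3 x (by omega) (by omega) ?_
    rw [wd_nat _ _ (by omega)]; exact h7

theorem DD_iff (u : List A) (r : List (RLetter A)) : ∀ q : ℕ,
    (evalFrom u r q).isSome ↔ DD (wd u) 0 (u.length + 1) q r := by
  induction r with
  | nil => intro q; simp [evalFrom, DD]
  | cons z r ih =>
    intro q
    cases z with
    | X a =>
      simp only [evalFrom, stepR, DD]
      constructor
      · intro h
        rcases hp : nextOcc u a q with _ | p
        · simp [hp] at h
        · rw [hp] at h
          rw [next_iff] at hp
          have := wd_some hp.2.1
          exact ⟨p, hp, by omega, (ih p).1 h⟩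
      · rintro ⟨p, h1, h2, h3⟩
        have := wd_some h1.2.1
        lift p to ℕ using by omega
        rw [(next_iff u a q p).2 h1]
        exact (ih p).2 h3
    | Y a =>
      simp only [evalFrom, stepR, DD]
      constructor
      · intro h
        rcases hp : prevOcc u a q with _ | p
        · simp [hp] at h
        · rw [hp] at h
          rw [prev_iff] at hp
          have := wd_some hp.2.1
          exact ⟨p, hp, by omega, (ih p).1 h⟩
      · rintro ⟨p, h1, h2, h3⟩
        have := wd_some h1.2.1
        lift p to ℕ using by omega
        rw [(prev_iff u a q p).2 h1]
        exact (ih p).2 h3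

/-- One step of the interval chain. -/
def Stp (u : List A) : RLetter A → RLetter A → ℕ → ℕ → ℕ → ℕ → Prop
  | .X a, .X _, i, j, i', j' => nextOcc u a i = some i' ∧ j' = j
  | .Y a, .Y _, i, j, i', j' => i' = i ∧ prevOcc u a j = some j'
  | .X a, .Y _, i, _, i', j' => i' = i ∧ nextOcc u a i = some j'
  | .Y a, .X _, _, j, i', j' => prevOcc u a j = some i' ∧ j' = j

def Shr (i j i' j' : ℕ) : Prop := i ≤ i' ∧ j' ≤ j ∧ (i < i' ∨ j' < j)

/-- The chain, recursively. -/
def Chn (u : List A) (p : ℕ) : List (RLetter A) → (ℕ → ℕ) → (ℕ → ℕ) → Prop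
  | [], _, _ => True
  | [_], i, j => i 0 < p ∧ p < j 0
  | z :: y :: t, i, j => Stp u z y (i 0) (j 0) (i 1) (j 1) ∧ Shr (i 0) (j 0) (i 1) (j 1) ∧
      Chn u p (y :: t) (fun k => i (k+1)) (fun k => j (k+1))

theorem Chn_iff (u : List A) (p : ℕ) (r : List (RLetter A)) (hr : r ≠ []) : ∀ i j : ℕ → ℕ,
    Chn u p r i j ↔
    ((∀ k z y, r[k]? = some z → r[k+1]? = some y → Stp u z y (i k) (j k) (i (k+1)) (j (k+1))) ∧
    (∀ k, k + 1 < r.length → Shr (i k) (j k) (i (k+1)) (j (k+1))) ∧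
    i (r.length - 1) < p ∧ p < j (r.length - 1)) := by
  induction r with
  | nil => simp at hr
  | cons z r ih =>
    intro i j
    cases r with
    | nil => simp [Chn]
    | cons y t =>
      simp only [Chn]
      rw [ih (by simp)]
      constructor
      · rintro ⟨h1, h2, h3, h4, h5⟩
        refine ⟨?_, ?_, by simpa using h5⟩
        · rintro (_ | k) z' y' e1 e2
          · simp at e1 e2; subst e1 e2; exact h1
          · exact h3 k z' y' (by simpa using e1) (by simpa using e2)
        · rintro (_ | k) hk
          · exact h2
          · exact h4 k (by simp at hk ⊢; omega)
      · rintro ⟨h1, h2, h3⟩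
        refine ⟨h1 0 _ _ (by simp) (by simp), h2 0 (by simp), ?_, ?_, by simpa using h3⟩
        · intro k z' y' e1 e2
          exact h1 (k+1) z' y' (by simpa using e1) (by simpa using e2)
        · intro k hk
          exact h2 (k+1) (by simp at hk ⊢; omega)

theorem Condensed_iff_Chn (u : List A) (r : List (RLetter A)) (hr : r ≠ []) :
    Condensed u r ↔ ∃ p i j, evalR u r = some p ∧ i 0 = 0 ∧ j 0 = u.length + 1 ∧
      Chn u p r i j := by
  unfold Condensed
  refine exists_congr fun p => exists_congr fun i => exists_congr fun j => ?_
  refine and_congr_right fun _ => and_congr_right fun _ => and_congr_right fun _ => ?_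
  rw [Chn_iff u p r hr]
  constructor
  · rintro ⟨h1, h2, h3, h4, h5, h6⟩
    refine ⟨?_, fun k hk => h5 (k+1) (by omega) hk, h6⟩
    rintro k (a | a) (b | b) e1 e2
    · exact h1 (k+1) a b (by omega) e1 e2
    · exact h3 (k+1) a b (by omega) e1 e2
    · exact h4 (k+1) a b (by omega) e1 e2
    · exact h2 (k+1) a b (by omega) e1 e2
  · rintro ⟨h1, h2, h3⟩
    refine ⟨?_, ?_, ?_, ?_, ?_, h3⟩
    · rintro (_ | k) a b hk e1 e2
      · omega
      · exact h1 k _ _ e1 e2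
    · rintro (_ | k) a b hk e1 e2
      · omega
      · exact h1 k _ _ e1 e2
    · rintro (_ | k) a b hk e1 e2
      · omega
      · exact h1 k _ _ e1 e2
    · rintro (_ | k) a b hk e1 e2
      · omega
      · exact h1 k _ _ e1 e2
    · rintro (_ | k) hk e1
      · omega
      · exact h2 k e1

def stp (i j : ℕ) : RLetter A → ℕ
  | .X _ => i
  | .Y _ => j

theorem CC_lt (w : ℤ → Option A) (z : RLetter A) (t : List (RLetter A)) (i j : ℤ)
    (h : CC w i j (z :: t)) : i < j := by
  cases z with
  | X a => obtain ⟨p, h1, h2, _⟩ := h; have := h1.1; omega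
  | Y a => obtain ⟨p, h1, h2, _⟩ := h; have := h1.1; omega

def cns (x : ℕ) (f : ℕ → ℕ) : ℕ → ℕ
  | 0 => x
  | k+1 => f k

theorem Chn_CC (u : List A) (t : List (RLetter A)) : ∀ (z : RLetter A) (i0 j0 : ℕ),
    (∃ p i j, evalFrom u (z :: t) (stp i0 j0 z) = some p ∧ i 0 = i0 ∧ j 0 = j0 ∧
      Chn u p (z :: t) i j) ↔ CC (wd u) i0 j0 (z :: t) := by
  induction t with
  | nil =>
    intro z i0 j0
    constructor
    · rintro ⟨p, i, j, h1, rfl, rfl, h2, h3⟩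
      cases z with
      | X a =>
        simp [evalFrom, stepR, stp, next_iff] at h1
        exact ⟨p, h1, by omega, by simp [HX], by simp [HY]⟩
      | Y a =>
        simp [evalFrom, stepR, stp, prev_iff] at h1
        exact ⟨p, h1, by omega, by simp [HX], by simp [HY]⟩
    · intro h
      cases z with
      | X a =>
        obtain ⟨p, h1, h2, -⟩ := h
        have := wd_some h1.2.1
        lift p to ℕ using by omega
        have := h1.1
        refine ⟨p, fun _ => i0, fun _ => j0, ?_, rfl, rfl, by beta_reduce; omega, by beta_reduce; omega⟩
        simpa [evalFrom, stepR, stp, next_iff] using h1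
      | Y a =>
        obtain ⟨p, h1, h2, -⟩ := h
        have := wd_some h1.2.1
        lift p to ℕ using by omega
        have := h1.1
        refine ⟨p, fun _ => i0, fun _ => j0, ?_, rfl, rfl, by beta_reduce; omega, by beta_reduce; omega⟩
        simpa [evalFrom, stepR, stp, prev_iff] using h1
  | cons y t ih =>
    intro z i0 j0
    constructor
    · rintro ⟨p, i, j, h1, rfl, rfl, h2, ⟨s1, s2, s3⟩, h4⟩
      have key : evalFrom u (y :: t) (stp (i 1) (j 1) y) = some p → CC (wd u) (i 1) (j 1) (y :: t) :=
        fun h => (ih y (i 1) (j 1)).1 ⟨p, _, _, h, rfl, rfl, h4⟩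
      rw [evalFrom] at h1
      rcases z with a | a <;> rcases y with b | b <;> obtain ⟨e1, e2⟩ := h2
      · have k := key (by simpa [stepR, stp, e1] using h1)
        have := CC_lt _ _ _ _ _ k
        rw [e2] at k this
        exact ⟨i 1, (next_iff _ _ _ _).1 e1, this, fun _ => k, by simp [HY]⟩
      · have k := key (by simpa [stepR, stp, e2] using h1)
        rw [e1] at k
        exact ⟨j 1, (next_iff _ _ _ _).1 e2, by omega, by simp [HX], fun _ => k⟩
      · have k := key (by simpa [stepR, stp, e1] using h1)
        rw [e2] at k
        exact ⟨i 1, (prev_iff _ _ _ _).1 e1, by omega, fun _ => k, by simp [HY]⟩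
      · have k := key (by simpa [stepR, stp, e2] using h1)
        have := CC_lt _ _ _ _ _ k
        rw [e1] at k this
        exact ⟨j 1, (prev_iff _ _ _ _).1 e2, this, by simp [HX], fun _ => k⟩
    · intro h
      have build : ∀ i1 j1 : ℕ, CC (wd u) i1 j1 (y :: t) → Stp u z y i0 j0 i1 j1 →
          Shr i0 j0 i1 j1 → stepR u z (stp i0 j0 z) = some (stp i1 j1 y) →
          ∃ p i j, evalFrom u (z :: y :: t) (stp i0 j0 z) = some p ∧ i 0 = i0 ∧ j 0 = j0 ∧
            Chn u p (z :: y :: t) i j := by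
        intro i1 j1 hc hs hh he
        obtain ⟨p, i, j, g1, rfl, rfl, g4⟩ := (ih y i1 j1).2 hc
        refine ⟨p, cns i0 i, cns j0 j, ?_, rfl, rfl, hs, hh, g4⟩
        rw [evalFrom, he]; exact g1
      rcases z with a | a <;> obtain ⟨q, h1, h2, h3, h4⟩ := h <;> have hq := wd_some h1.2.1 <;>
        lift q to ℕ using by omega
      · have e := (next_iff u a i0 q).2 h1
        have := h1.1
        rcases y with b | b
        · exact build q j0 (h3 trivial) ⟨e, rfl⟩ ⟨by omega, by omega, by omega⟩ e
        · exact build i0 q (h4 trivial) ⟨rfl, e⟩ ⟨by omega, by omega, by omega⟩ e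
      · have e := (prev_iff u a j0 q).2 h1
        have := h1.1
        rcases y with b | b
        · exact build q j0 (h3 trivial) ⟨e, rfl⟩ ⟨by omega, by omega, by omega⟩ e
        · exact build i0 q (h4 trivial) ⟨rfl, e⟩ ⟨by omega, by omega, by omega⟩ e

theorem Condensed_iff (u : List A) (r : List (RLetter A)) (hr : r ≠ []) :
    Condensed u r ↔ CC (wd u) 0 (u.length + 1) r := by
  rw [Condensed_iff_Chn u r hr]
  rcases r with _ | ⟨z, t⟩
  · simp at hr
  · have := Chn_CC u t z 0 (u.length + 1)
    push_cast at this
    rw [← this]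
    cases z <;> rfl

theorem Defined_iff_X (u : List A) (r : List (RLetter A)) (hr : HX r) :
    Defined u r ↔ DD (wd u) 0 (u.length + 1) 0 r := by
  rcases r with _ | ⟨⟨b⟩ | ⟨b⟩, x⟩
  · simp [HX] at hr
  · have := DD_iff u (.X b :: x) 0
    push_cast at this
    exact this
  · simp [HX] at hr

theorem Defined_iff_Y (u : List A) (r : List (RLetter A)) (hr : HY r) :
    Defined u r ↔ DD (wd u) 0 (u.length + 1) (u.length + 1) r := by
  rcases r with _ | ⟨⟨b⟩ | ⟨b⟩, x⟩
  · simp [HY] at hr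
  · simp [HY] at hr
  · have := DD_iff u (.Y b :: x) (u.length + 1)
    push_cast at this
    exact this

theorem startsX_iff (r : List (RLetter A)) : startsX r ↔ HX r := by
  rcases r with _ | ⟨⟨b⟩ | ⟨b⟩, x⟩ <;> simp [startsX, HX]

theorem startsY_iff (r : List (RLetter A)) : startsY r ↔ HY r := by
  rcases r with _ | ⟨⟨b⟩ | ⟨b⟩, x⟩ <;> simp [startsY, HY]

theorem uRX_iff (m n : ℕ) (r : List (RLetter A)) : uRX m n r ↔ PX m n r := by
  simp only [uRX, PX, RX, RY, startsX_iff, startsY_iff]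
  constructor
  · rintro (⟨_, _, h1, h2, rfl, rfl, h3⟩ | ⟨_, _, h1, h2, rfl, rfl, h3⟩)
    · exact Or.inl ⟨h3, h1, h2⟩
    · exact Or.inr ⟨h3, h1, h2⟩
  · rintro (⟨h3, h1, h2⟩ | ⟨h3, h1, h2⟩)
    · exact Or.inl ⟨_, _, h1, h2, rfl, rfl, h3⟩
    · exact Or.inr ⟨_, _, h1, h2, rfl, rfl, h3⟩

theorem uRY_iff (m n : ℕ) (r : List (RLetter A)) : uRY m n r ↔ PY m n r := by
  simp only [uRY, PY, RX, RY, startsX_iff, startsY_iff]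
  constructor
  · rintro (⟨_, _, h1, h2, rfl, rfl, h3⟩ | ⟨_, _, h1, h2, rfl, rfl, h3⟩)
    · exact Or.inl ⟨h3, h1, h2⟩
    · exact Or.inr ⟨h3, h1, h2⟩
  · rintro (⟨h3, h1, h2⟩ | ⟨h3, h1, h2⟩)
    · exact Or.inl ⟨_, _, h1, h2, rfl, rfl, h3⟩
    · exact Or.inr ⟨_, _, h1, h2, rfl, rfl, h3⟩

theorem ne_nil_of {r : List (RLetter A)} (h : HX r ∨ HY r) : r ≠ [] := by
  rintro rfl; simp [HX, HY] at h

theorem final_step (u v : List A) (r : List (RLetter A)) (hr : HX r ∨ HY r)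
    (h : (HX r → (DD (wd u) 0 (u.length + 1) 0 r ↔ DD (wd v) 0 (v.length + 1) 0 r)) ∧
      (HY r → (DD (wd u) 0 (u.length + 1) (u.length + 1) r ↔
        DD (wd v) 0 (v.length + 1) (v.length + 1) r))) : Defined u r ↔ Defined v r := by
  rcases hr with hr | hr
  · rw [Defined_iff_X _ _ hr, Defined_iff_X _ _ hr]; exact h.1 hr
  · rw [Defined_iff_Y _ _ hr, Defined_iff_Y _ _ hr]; exact h.2 hr

/-- Agreement on condensed rankers from `uR^Z_{m,n}` implies agreement
on rankers from the same class. -/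
theorem statement7 (m n : ℕ) (hm : 1 ≤ m) (hmn : m ≤ n)
    (ZR : ℕ → ℕ → List (RLetter A) → Prop) (hZR : ZR = uRX ∨ ZR = uRY)
    (u v : List A) (hu : u ≠ []) (hv : v ≠ [])
    (hagree : ∀ r, ZR m n r → (Condensed u r ↔ Condensed v r)) :
    ∀ r, ZR m n r → (Defined u r ↔ Defined v r) := by
  rcases hZR with rfl | rfl
  · intro r hr
    have hH : ∀ r : List (RLetter A), PX m n r → HX r ∨ HY r := fun r h =>
      h.elim (fun h => Or.inl h.1) (fun h => Or.inr h.1)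
    refine final_step u v r (hH r ((uRX_iff m n r).1 hr)) ?_
    refine mainAll m n _ _ _ _ _ _ ?_ r ((uRX_iff m n r).1 hr)
    intro t ht
    rw [← Condensed_iff u t (ne_nil_of (hH t ht)), ← Condensed_iff v t (ne_nil_of (hH t ht))]
    exact hagree t ((uRX_iff m n t).2 ht)
  · intro r hr
    have hH : ∀ r : List (RLetter A), PY m n r → HX r ∨ HY r := fun r h =>
      h.elim (fun h => Or.inr h.1) (fun h => Or.inl h.1)
    refine final_step u v r (hH r ((uRY_iff m n r).1 hr)) ?_
    refine mainAllY m n _ _ _ _ _ _ ?_ r ((uRY_iff m n r).1 hr)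
    intro t ht
    rw [← Condensed_iff u t (ne_nil_of (hH t ht)), ← Condensed_iff v t (ne_nil_of (hH t ht))]
    exact hagree t ((uRY_iff m n t).2 ht)

end RankerPaper
end

section
/- Let u, v ∈ A* and 1 ≤ m ≤ n. Then the conjunction of conditions (WI1), (WI2), (WI3) holds if and only if the conjunction of conditions (WI1c), (WI2c), (WI3c) holds, where: (WI1) u and v agree on rankers from uR_{m,n}; (WI2) whenever r ∈ uR_{m,n} and r' ∈ uR_{m-1,n-1} are both defined on u and on v, ord(r(u),r'(u)) = ord(r(v),r'(v)); (WI3) whenever r ∈ uR_{m,n} and r' ∈ uR_{m,n-1} are both defined on u and on v and end with different direction letters (one ends with an X-letter, the other with a Y-letter), ord(r(u),r'(u)) = ord(r(v),r'(v)); and (WI1c), (WI2c), (WI3c) are the same three conditions with 'defined on' replaced throughout by 'condensed on'. -/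
namespace RankerPaper

variable {A : Type*} [DecidableEq A]

/-- `p` is an `a`-position of `u`. -/
def Occ (u : List A) (a : A) (p : ℕ) : Prop := 1 ≤ p ∧ p ≤ u.length ∧ u[p-1]? = some a

theorem occ_of {u : List A} {a : A} {p : ℕ} (h1 : 1 ≤ p) (h : u[p-1]? = some a) : Occ u a p := by
  refine ⟨h1, ?_, h⟩
  have := (List.getElem?_eq_some_iff.1 h).1
  omega

theorem nextOcc_some {u : List A} {a : A} {q p : ℕ} :
    nextOcc u a q = some p ↔ Occ u a p ∧ q < p ∧ ∀ k, Occ u a k → q < k → p ≤ k := by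
  unfold nextOcc
  rw [List.head?_filter, List.find?_range_eq_some]
  simp only [decide_eq_true_eq, List.mem_range, Bool.not_eq_true', decide_eq_false_iff_not]
  constructor
  · rintro ⟨⟨h1, h2⟩, h3, h4⟩
    refine ⟨occ_of (by omega) h2, h1, fun k hk hq => ?_⟩
    by_contra hlt
    exact h4 k (by omega) ⟨hq, hk.2.2⟩
  · rintro ⟨h1, h2, h3⟩
    refine ⟨⟨h2, h1.2.2⟩, by have := h1.2.1; omega, fun j hj hh => ?_⟩
    have := h3 j (occ_of (by omega) hh.2) hh.1
    omega

theorem nextOcc_none {u : List A} {a : A} {q : ℕ} :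
    nextOcc u a q = none ↔ ∀ k, Occ u a k → ¬ q < k := by
  unfold nextOcc
  simp only [List.head?_eq_none_iff, List.filter_eq_nil_iff, List.mem_range, decide_eq_true_eq]
  constructor
  · intro h k hk hq
    exact h k (by have := hk.2.1; omega) ⟨hq, hk.2.2⟩
  · intro h k _ hh
    exact h k (occ_of (by omega) hh.2) hh.1

theorem prevOcc_none {u : List A} {a : A} {q : ℕ} :
    prevOcc u a q = none ↔ ∀ k, Occ u a k → ¬ k < q := by
  unfold prevOcc
  simp only [List.getLast?_eq_none_iff, List.filter_eq_nil_iff, List.mem_range, decide_eq_true_eq]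
  constructor
  · intro h k hk hq
    exact h k (by have := hk.2.1; omega) ⟨hk.1, hq, hk.2.2⟩
  · intro h k _ hh
    exact h k (occ_of hh.1 hh.2.2) hh.2.1

theorem prevOcc_some_mp {u : List A} {a : A} {q p : ℕ} (h : prevOcc u a q = some p) :
    Occ u a p ∧ p < q ∧ ∀ k, Occ u a k → k < q → k ≤ p := by
  unfold prevOcc at h
  rw [List.getLast?_eq_some_iff] at h
  obtain ⟨ys, h⟩ := h
  have hs : (ys ++ [p]).Pairwise (· < ·) := by
    rw [← h]; exact List.Pairwise.filter _ List.pairwise_lt_range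
  have hm : ∀ k, k ∈ ys ++ [p] ↔ k < u.length + 2 ∧ 1 ≤ k ∧ k < q ∧ u[k-1]? = some a := by
    intro k; rw [← h]; simp
  have hp := (hm p).1 (by simp)
  refine ⟨occ_of hp.2.1 hp.2.2.2, hp.2.2.1, fun k hk hq => ?_⟩
  have hk' := (hm k).2 ⟨by have := hk.2.1; omega, hk.1, hq, hk.2.2⟩
  rw [List.pairwise_append] at hs
  rcases List.mem_append.1 hk' with h1 | h1
  · exact (hs.2.2 k h1 p (by simp)).le
  · simp at h1; omega

theorem prevOcc_some {u : List A} {a : A} {q p : ℕ} :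
    prevOcc u a q = some p ↔ Occ u a p ∧ p < q ∧ ∀ k, Occ u a k → k < q → k ≤ p := by
  refine ⟨prevOcc_some_mp, fun ⟨h1, h2, h3⟩ => ?_⟩
  cases h : prevOcc u a q with
  | none => exact absurd h2 (prevOcc_none.1 h p h1)
  | some p' =>
    have h' := prevOcc_some_mp h
    have := h3 p' h'.1 h'.2.1
    have := h'.2.2 p h1 h2
    congr 1; omega

/-- The letter underlying a ranker letter. -/
def ltr : RLetter A → A
  | .X a => a
  | .Y a => a

/-- Opposite direction. -/
def op : RLetter A → RLetter A
  | .X a => .Y a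
  | .Y a => .X a

/-- `p` is reached strictly before `b` when moving in the direction of the letter. -/
def Bef : RLetter A → ℕ → ℕ → Prop
  | .X _, p, b => p < b
  | .Y _, p, b => b < p

theorem step_occ {u : List A} {Z : RLetter A} {q p : ℕ} (h : stepR u Z q = some p) :
    Occ u (ltr Z) p ∧ Bef Z q p := by
  cases Z with
  | X a => exact ⟨(nextOcc_some.1 h).1, (nextOcc_some.1 h).2.1⟩
  | Y a => exact ⟨(prevOcc_some.1 h).1, (prevOcc_some.1 h).2.1⟩

theorem step_far {u : List A} {Z : RLetter A} {q b : ℕ} (hq : Bef Z q b)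
    (h : ¬ ∃ p, stepR u Z q = some p ∧ Bef Z p b) :
    (Occ u (ltr Z) b → stepR u Z q = some b) ∧
    (¬ Occ u (ltr Z) b → stepR u Z q = stepR u Z b) := by
  cases Z with
  | X a =>
    simp only [stepR, Bef, ltr] at *
    have key : ∀ k, Occ u a k → q < k → b ≤ k := by
      intro k hk hqk
      by_contra hlt
      cases h' : nextOcc u a q with
      | none => exact nextOcc_none.1 h' k hk hqk
      | some p =>
        have := (nextOcc_some.1 h').2.2 k hk hqk
        exact h ⟨p, h', by omega⟩
    refine ⟨fun ho => nextOcc_some.2 ⟨ho, hq, key⟩, fun ho => ?_⟩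
    have key2 : ∀ k, Occ u a k → (q < k ↔ b < k) := by
      intro k hk
      refine ⟨fun h1 => ?_, fun h1 => by omega⟩
      rcases (key k hk h1).lt_or_eq with h2 | h2
      · exact h2
      · subst h2; exact absurd hk ho
    ext p
    simp only [nextOcc_some]
    constructor
    · rintro ⟨h1, h2, h3⟩
      exact ⟨h1, (key2 p h1).1 h2, fun k hk hb => h3 k hk ((key2 k hk).2 hb)⟩
    · rintro ⟨h1, h2, h3⟩
      exact ⟨h1, (key2 p h1).2 h2, fun k hk hb => h3 k hk ((key2 k hk).1 hb)⟩
  | Y a =>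
    simp only [stepR, Bef, ltr] at *
    have key : ∀ k, Occ u a k → k < q → k ≤ b := by
      intro k hk hqk
      by_contra hlt
      cases h' : prevOcc u a q with
      | none => exact prevOcc_none.1 h' k hk hqk
      | some p =>
        have := (prevOcc_some.1 h').2.2 k hk hqk
        exact h ⟨p, h', by omega⟩
    refine ⟨fun ho => prevOcc_some.2 ⟨ho, hq, key⟩, fun ho => ?_⟩
    have key2 : ∀ k, Occ u a k → (k < q ↔ k < b) := by
      intro k hk
      refine ⟨fun h1 => ?_, fun h1 => by omega⟩
      rcases (key k hk h1).lt_or_eq with h2 | h2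
      · exact h2
      · subst h2; exact absurd hk ho
    ext p
    simp only [prevOcc_some]
    constructor
    · rintro ⟨h1, h2, h3⟩
      exact ⟨h1, (key2 p h1).1 h2, fun k hk hb => h3 k hk ((key2 k hk).2 hb)⟩
    · rintro ⟨h1, h2, h3⟩
      exact ⟨h1, (key2 p h1).2 h2, fun k hk hb => h3 k hk ((key2 k hk).1 hb)⟩

theorem occ_bef_start {u : List A} {Z : RLetter A} {a : A} {p : ℕ} (h : Occ u a p) :
    Bef Z p (startPos u (op Z)) := by
  have := h.1
  have := h.2.1
  cases Z <;> simp only [Bef, op, startPos] <;> omega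

/-- Evaluation of a reversed ranker. -/
def ev (u : List A) (Z : RLetter A) : List (RLetter A) → Option ℕ
  | [] => some (startPos u Z)
  | W :: w => (ev u W w).bind (stepR u W)

/-- The prefix whose value is the opposing boundary. -/
def opp (Z : RLetter A) : List (RLetter A) → List (RLetter A)
  | [] => []
  | W :: w => if sameDir Z W then opp Z w else w

/-- Condensedness for reversed rankers. -/
def C (u : List A) : List (RLetter A) → Prop
  | [] => True
  | Z :: w => C u w ∧ ∃ p b, ev u Z (Z :: w) = some p ∧ ev u (op Z) (opp Z w) = some b ∧ Bef Z p b

theorem ev_cons (u : List A) (Z Z' W : RLetter A) (w) : ev u Z (W :: w) = ev u Z' (W :: w) := rfl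

theorem ev_occ {u : List A} {Z W : RLetter A} {w p} (h : ev u Z (W :: w) = some p) :
    Occ u (ltr W) p := by
  simp only [ev, Option.bind_eq_some_iff] at h
  obtain ⟨q, _, h⟩ := h
  exact (step_occ h).1

theorem occ_inj {u : List A} {a b : A} {p : ℕ} (h : Occ u a p) (h' : Occ u b p) : a = b := by
  have := h.2.2.symm.trans h'.2.2
  simpa using this

theorem C_ev {u : List A} {w} (h : C u w) (Z : RLetter A) : ∃ p, ev u Z w = some p := by
  cases w with
  | nil => exact ⟨_, rfl⟩
  | cons W w => obtain ⟨p, b, h1, _⟩ := h.2; exact ⟨p, h1⟩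

theorem opp_suffix (Z : RLetter A) (w) : ∃ t, w = t ++ opp Z w := by
  induction w with
  | nil => exact ⟨[], rfl⟩
  | cons W w ih =>
    obtain ⟨t, ht⟩ := ih
    simp only [opp]
    split_ifs
    · exact ⟨W :: t, by simp [← ht]⟩
    · exact ⟨[W], rfl⟩

theorem C_opp {u : List A} {w} (Z : RLetter A) (h : C u w) : C u (opp Z w) := by
  induction w with
  | nil => trivial
  | cons W w ih =>
    simp only [opp]
    split_ifs
    · exact ih h.1
    · exact h.1

theorem opp_same {Z W : RLetter A} (h : sameDir Z W = true) (w) : opp Z w = opp W w := by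
  induction w with
  | nil => rfl
  | cons V w ih =>
    have : sameDir Z V = sameDir W V := by cases Z <;> cases W <;> cases V <;> simp_all [sameDir]
    simp only [opp, this, ih]

theorem ev_same {u : List A} {Z W : RLetter A} (h : startPos u Z = startPos u W) (w) :
    ev u Z w = ev u W w := by
  cases w with
  | nil => simp [ev, h]
  | cons _ _ => rfl

theorem bef_opp {u : List A} {w} (Z : RLetter A) (h : C u w) :
    ∃ q b, ev u Z w = some q ∧ ev u (op Z) (opp Z w) = some b ∧ Bef Z q b := by
  cases w with
  | nil =>
    refine ⟨_, _, rfl, rfl, ?_⟩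
    cases Z <;> simp [Bef, startPos, op]
  | cons W w =>
    by_cases hs : sameDir Z W = true
    · obtain ⟨p, b, h1, h2, h3⟩ := h.2
      refine ⟨p, b, h1, ?_, ?_⟩
      · simp only [opp, hs, if_true]
        rw [opp_same hs, ← h2]
        apply ev_same
        cases Z <;> cases W <;> simp_all [sameDir, op, startPos]
      · cases Z <;> cases W <;> simp_all [sameDir, Bef]
    · obtain ⟨p, hp⟩ := C_ev h Z
      simp only [opp, hs]
      have hp' := hp
      simp only [ev, Option.bind_eq_some_iff] at hp'
      obtain ⟨b, hb, hst⟩ := hp'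
      refine ⟨p, b, hp, ?_, ?_⟩
      · rw [← hb]
        apply ev_same
        cases Z <;> cases W <;> simp_all [sameDir, op, startPos]
      · have := (step_occ hst).2
        cases Z <;> cases W <;> simp_all [sameDir, Bef]

theorem reduceA {u : List A} {w} {Z : RLetter A} (h : C u w) (hn : ¬ C u (Z :: w)) :
    (opp Z w = [] → ev u Z (Z :: w) = none) ∧
    (∀ W s, opp Z w = W :: s →
      ev u Z (Z :: w) = if ltr W = ltr Z then ev u W (W :: s) else ev u Z (Z :: W :: s)) := by
  obtain ⟨q, b, hq, hb, hqb⟩ := bef_opp Z h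
  have hev : ev u Z (Z :: w) = stepR u Z q := by simp [ev, hq]
  have hno : ¬ ∃ p, stepR u Z q = some p ∧ Bef Z p b := by
    rintro ⟨p, hp, hpb⟩
    exact hn ⟨h, p, b, hev.trans hp, hb, hpb⟩
  constructor
  · intro h0
    rw [hev]
    rw [h0] at hb
    simp only [ev, Option.some.injEq] at hb
    subst hb
    cases hs : stepR u Z q with
    | none => rfl
    | some p => exact absurd ⟨p, hs, occ_bef_start (step_occ hs).1⟩ hno
  · intro W s hWs
    rw [hWs] at hb
    have ho := ev_occ hb
    obtain ⟨f1, f2⟩ := step_far hqb hno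
    have hb' : ev u W (W :: s) = some b := hb
    have hb2 : ev u Z (Z :: W :: s) = stepR u Z b := by
      show (ev u Z (W :: s)).bind (stepR u Z) = _
      rw [ev_cons u Z W, hb']; rfl
    rw [hev, hb', hb2]
    split_ifs with he
    · exact f1 (he ▸ ho)
    · exact f2 (fun h' => he (occ_inj ho h'))

theorem nb_cons (Z W : RLetter A) (w) :
    numBlocks (Z :: W :: w) = (if sameDir Z W then 0 else 1) + numBlocks (W :: w) := rfl

theorem nb_pos (Z : RLetter A) (w) : 1 ≤ numBlocks (Z :: w) := by
  induction w generalizing Z with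
  | nil => simp [numBlocks]
  | cons W w ih => rw [nb_cons]; have := ih W; omega

theorem nb_same {Z W : RLetter A} (h : sameDir Z W = true) (w) :
    numBlocks (Z :: w) = numBlocks (W :: w) := by
  cases w with
  | nil => rfl
  | cons V w =>
    have : sameDir Z V = sameDir W V := by cases Z <;> cases W <;> cases V <;> simp_all [sameDir]
    simp only [nb_cons, this]

theorem nb_le_cons (Z : RLetter A) (w) : numBlocks w ≤ numBlocks (Z :: w) := by
  cases w with
  | nil => simp [numBlocks]
  | cons W w => rw [nb_cons]; omega

theorem nb_cons_le (Z : RLetter A) (w) : numBlocks (Z :: w) ≤ numBlocks w + 1 := by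
  cases w with
  | nil => simp [numBlocks]
  | cons W w => rw [nb_cons]; split_ifs <;> omega

theorem nb_opp (Z : RLetter A) (w) : numBlocks (Z :: opp Z w) ≤ numBlocks (Z :: w) := by
  induction w with
  | nil => exact le_rfl
  | cons W w ih =>
    rw [nb_cons]
    by_cases hs : sameDir Z W = true
    · simp only [opp, hs, if_true]
      rw [nb_same hs w] at ih
      omega
    · simp only [opp, hs]
      have := nb_le_cons W w
      have := nb_cons_le Z w
      simp; omega

theorem nb_opp_lt (Z : RLetter A) (w) (h : w ≠ []) : 
    numBlocks (opp Z w) + 1 ≤ numBlocks (Z :: w) ∧ (opp Z w).length + 1 ≤ w.length := by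
  induction w with
  | nil => exact absurd rfl h
  | cons W w ih =>
    rw [nb_cons]
    by_cases hs : sameDir Z W = true
    · simp only [opp, hs, if_true]
      rw [nb_same hs w] at ih
      by_cases hw : w = []
      · subst hw; simp [opp, numBlocks]
      · have := ih hw
        simp only [List.length_cons]; omega
    · simp only [opp, hs]
      have := nb_le_cons W w
      simp; omega

theorem nb_append (l : List (RLetter A)) (y : RLetter A) (t) :
    numBlocks (l ++ y :: t) + 1 = numBlocks (l ++ [y]) + numBlocks (y :: t) := by
  induction l with
  | nil => simp [numBlocks]; omega
  | cons x l ih =>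
    cases l with
    | nil => simp only [List.cons_append, List.nil_append, nb_cons] at *; omega
    | cons z l => simp only [List.cons_append, nb_cons] at *; omega

theorem nb_reverse (l : List (RLetter A)) : numBlocks l.reverse = numBlocks l := by
  induction l with
  | nil => rfl
  | cons z l ih =>
    cases l with
    | nil => rfl
    | cons w t =>
      have h := nb_append t.reverse w [z]
      have hs : sameDir w z = sameDir z w := by cases w <;> cases z <;> rfl
      simp only [List.reverse_cons, List.append_assoc, List.cons_append, List.nil_append] at *
      rw [ih, nb_cons, hs] at h
      rw [nb_cons]
      simp only [numBlocks] at h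
      omega

/-- Result of reducing the reversed ranker `Z :: w`. -/
def Res (u v : List A) (Z : RLetter A) (w : List (RLetter A)) : Prop :=
  (ev u Z (Z :: w) = none ∧ ev v Z (Z :: w) = none) ∨
  ∃ W s, C u (W :: s) ∧ C v (W :: s) ∧ ev u W (W :: s) = ev u Z (Z :: w) ∧
    ev v W (W :: s) = ev v Z (Z :: w) ∧ s.length ≤ w.length ∧
    numBlocks (Z :: W :: s) ≤ numBlocks (Z :: w) ∧ (sameDir Z W = true ∨ s.length < w.length)

theorem sameDir_refl (Z : RLetter A) : sameDir Z Z = true := by cases Z <;> rfl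

theorem resB {u v : List A} {m n : ℕ}
    (H : ∀ Z w, numBlocks (Z :: w) ≤ m → (Z :: w).length ≤ n → (C u (Z :: w) ↔ C v (Z :: w)))
    (N : ℕ) : ∀ (Z : RLetter A) w, w.length ≤ N → C u w → C v w → numBlocks (Z :: w) ≤ m →
      (Z :: w).length ≤ n → Res u v Z w := by
  induction N with
  | zero =>
    intro Z w hN hu hv hm hn
    have hw : w = [] := by simpa using hN
    subst hw
    by_cases hc : C u [Z]
    · exact Or.inr ⟨Z, [], hc, (H Z [] hm hn).1 hc, rfl, rfl, le_rfl,
        by rw [nb_cons]; simp [sameDir_refl], Or.inl (sameDir_refl Z)⟩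
    · have hc' : ¬ C v [Z] := fun h => hc ((H Z [] hm hn).2 h)
      exact Or.inl ⟨(reduceA hu hc).1 rfl, (reduceA hv hc').1 rfl⟩
  | succ N ih =>
    intro Z w hN hu hv hm hn
    by_cases hc : C u (Z :: w)
    · exact Or.inr ⟨Z, w, hc, (H Z w hm hn).1 hc, rfl, rfl, le_rfl,
        by rw [nb_cons]; simp [sameDir_refl], Or.inl (sameDir_refl Z)⟩
    · have hc' : ¬ C v (Z :: w) := fun h => hc ((H Z w hm hn).2 h)
      have ru := reduceA hu hc
      have rv := reduceA hv hc'
      cases ho : opp Z w with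
      | nil => exact Or.inl ⟨ru.1 ho, rv.1 ho⟩
      | cons W s =>
        have hw : w ≠ [] := by rintro rfl; simp [opp] at ho
        have hlt := (nb_opp_lt Z w hw).2
        have hnb := nb_opp Z w
        have cu := C_opp Z hu
        have cv := C_opp Z hv
        have eu := ru.2 W s ho
        have evv := rv.2 W s ho
        rw [ho] at hlt hnb cu cv
        simp only [List.length_cons] at hlt hn
        by_cases hl : ltr W = ltr Z
        · rw [if_pos hl] at eu evv
          exact Or.inr ⟨W, s, cu, cv, eu.symm, evv.symm, by omega, hnb, Or.inr (by omega)⟩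
        · rw [if_neg hl] at eu evv
          rcases ih Z (W :: s) (by simp only [List.length_cons]; omega) cu cv (hnb.trans hm)
            (by simp only [List.length_cons]; omega) with h | ⟨V, t, h1, h2, h3, h4, h5, h6, h7⟩
          · exact Or.inl ⟨eu.trans h.1, evv.trans h.2⟩
          · simp only [List.length_cons] at h5
            exact Or.inr ⟨V, t, h1, h2, h3.trans eu.symm, h4.trans evv.symm, by omega,
              h6.trans hnb, Or.inr (by omega)⟩

theorem resD {u v : List A} {m n : ℕ}
    (H : ∀ Z w, numBlocks (Z :: w) ≤ m → (Z :: w).length ≤ n → (C u (Z :: w) ↔ C v (Z :: w)))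
    (w : List (RLetter A)) : ∀ Z : RLetter A, numBlocks (Z :: w) ≤ m →
      (Z :: w).length ≤ n → Res u v Z w := by
  induction w with
  | nil => intro Z hm hn; exact resB H 0 Z [] le_rfl trivial trivial hm hn
  | cons W w ih =>
    intro Z hm hn
    have hb := nb_le_cons Z (W :: w)
    simp only [List.length_cons] at hn
    rcases ih W (hb.trans hm) (by simp only [List.length_cons]; omega) with
      h | ⟨V, s, h1, h2, h3, h4, h5, h6, h7⟩
    · left
      constructor
      · show (ev u W (W :: w)).bind (stepR u Z) = none
        rw [h.1]; rfl
      · show (ev v W (W :: w)).bind (stepR v Z) = none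
        rw [h.2]; rfl
    · have hnb : numBlocks (Z :: V :: s) ≤ numBlocks (Z :: W :: w) := by
        by_cases hs : sameDir Z W = true
        · rw [nb_same hs (V :: s), nb_cons Z W]; omega
        · have := nb_cons_le Z (V :: s)
          have := nb_le_cons W (V :: s)
          rw [nb_cons Z W, if_neg hs]; omega
      have eu : ev u Z (Z :: V :: s) = ev u Z (Z :: W :: w) := by
        show (ev u V (V :: s)).bind (stepR u Z) = (ev u W (W :: w)).bind (stepR u Z)
        rw [h3]
      have evv : ev v Z (Z :: V :: s) = ev v Z (Z :: W :: w) := by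
        show (ev v V (V :: s)).bind (stepR v Z) = (ev v W (W :: w)).bind (stepR v Z)
        rw [h4]
      rcases resB H _ Z (V :: s) le_rfl h1 h2 (hnb.trans hm)
        (by simp only [List.length_cons]; omega) with h | ⟨V', t, g1, g2, g3, g4, g5, g6, g7⟩
      · exact Or.inl ⟨eu ▸ h.1, evv ▸ h.2⟩
      · simp only [List.length_cons] at g5 g7
        refine Or.inr ⟨V', t, g1, g2, g3.trans eu, g4.trans evv, by
          simp only [List.length_cons]; omega, g6.trans hnb, ?_⟩
        rcases g7 with g7 | g7
        · exact Or.inl g7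
        · right; simp only [List.length_cons]; omega

theorem evalFrom_snoc (u : List A) (r) (Z : RLetter A) (q : ℕ) :
    evalFrom u (r ++ [Z]) q = (evalFrom u r q).bind (stepR u Z) := by
  induction r generalizing q with
  | nil => simp [evalFrom]
  | cons W r ih =>
    simp only [List.cons_append, evalFrom, Option.bind_assoc]
    congr 1; funext x; exact ih x

theorem evalR_snoc (u : List A) (r) (Z : RLetter A) (h : r ≠ []) :
    evalR u (r ++ [Z]) = (evalR u r).bind (stepR u Z) := by
  cases r with
  | nil => exact absurd rfl h
  | cons W r => exact evalFrom_snoc u (W :: r) Z _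

theorem evalR_rev (u : List A) (Z Z' : RLetter A) (w) :
    evalR u (Z :: w).reverse = ev u Z' (Z :: w) := by
  induction w generalizing Z Z' with
  | nil => simp [evalR, evalFrom, ev]
  | cons W w ih =>
    rw [List.reverse_cons, evalR_snoc _ _ _ (by simp), ih W Z]; rfl

/-- Lower end of the interval before reading `Z` after `w`. -/
def lo (u : List A) : RLetter A → List (RLetter A) → ℕ
  | .X a, w => (ev u (.X a) w).getD 0
  | .Y a, w => (ev u (.X a) (opp (.Y a) w)).getD 0

/-- Upper end of the interval before reading `Z` after `w`. -/
def hi (u : List A) : RLetter A → List (RLetter A) → ℕ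
  | .X a, w => (ev u (.Y a) (opp (.X a) w)).getD 0
  | .Y a, w => (ev u (.Y a) w).getD 0

theorem C_last {u : List A} {Z : RLetter A} {w} (h : C u (Z :: w)) :
    ∃ p, ev u Z (Z :: w) = some p ∧ lo u Z w < p ∧ p < hi u Z w := by
  obtain ⟨hw, p, b, h1, h2, h3⟩ := h
  have h1' := h1
  simp only [ev, Option.bind_eq_some_iff] at h1'
  obtain ⟨q, hq, hst⟩ := h1'
  have hqp := (step_occ hst).2
  refine ⟨p, h1, ?_⟩
  cases Z with
  | X a => simp only [op] at h2; simp only [lo, hi, hq, h2, Option.getD_some]; exact ⟨hqp, h3⟩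
  | Y a => simp only [op] at h2; simp only [lo, hi, hq, h2, Option.getD_some]; exact ⟨h3, hqp⟩

theorem ev_X (u : List A) (a b : A) (w) : ev u (.X a) w = ev u (.X b) w :=
  ev_same (Z := .X a) (W := .X b) rfl w
theorem ev_Y (u : List A) (a b : A) (w) : ev u (.Y a) w = ev u (.Y b) w :=
  ev_same (Z := .Y a) (W := .Y b) rfl w

theorem st_XX {u : List A} {a b : A} {w} (h : C u (.X a :: w)) :
    nextOcc u a (lo u (.X a) w) = some (lo u (.X b) (.X a :: w)) ∧
    hi u (.X b) (.X a :: w) = hi u (.X a) w := by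
  obtain ⟨p, h1, -⟩ := C_last h
  obtain ⟨q, hq⟩ := C_ev h.1 (.X a)
  have h2 := h1
  simp only [ev, hq, Option.bind_some, stepR] at h2
  rw [ev_cons u _ (.X b)] at h1
  constructor
  · simp only [lo, hq, h1, Option.getD_some, h2]
  · simp only [hi, opp, sameDir, if_true]
    rw [opp_same (Z := .X b) (W := .X a) rfl, ev_Y u b a]

theorem st_YY {u : List A} {a b : A} {w} (h : C u (.Y a :: w)) :
    lo u (.Y b) (.Y a :: w) = lo u (.Y a) w ∧
    prevOcc u a (hi u (.Y a) w) = some (hi u (.Y b) (.Y a :: w)) := by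
  obtain ⟨p, h1, -⟩ := C_last h
  obtain ⟨q, hq⟩ := C_ev h.1 (.Y a)
  have h2 := h1
  simp only [ev, hq, Option.bind_some, stepR] at h2
  rw [ev_cons u _ (.Y b)] at h1
  constructor
  · simp only [lo, opp, sameDir, if_true]
    rw [opp_same (Z := .Y b) (W := .Y a) rfl, ev_X u b a]
  · simp only [hi, hq, h1, Option.getD_some, h2]

theorem st_XY {u : List A} {a b : A} {w} (h : C u (.X a :: w)) :
    lo u (.Y b) (.X a :: w) = lo u (.X a) w ∧
    nextOcc u a (lo u (.X a) w) = some (hi u (.Y b) (.X a :: w)) := by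
  obtain ⟨p, h1, -⟩ := C_last h
  obtain ⟨q, hq⟩ := C_ev h.1 (.X a)
  have h2 := h1
  simp only [ev, hq, Option.bind_some, stepR] at h2
  rw [ev_cons u _ (.Y b)] at h1
  constructor
  · simp only [lo, opp, sameDir]
    simp [ev_X u b a]
  · simp only [lo, hi, hq, h1, Option.getD_some, h2]

theorem st_YX {u : List A} {a b : A} {w} (h : C u (.Y a :: w)) :
    prevOcc u a (hi u (.Y a) w) = some (lo u (.X b) (.Y a :: w)) ∧
    hi u (.X b) (.Y a :: w) = hi u (.Y a) w := by
  obtain ⟨p, h1, -⟩ := C_last h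
  obtain ⟨q, hq⟩ := C_ev h.1 (.Y a)
  have h2 := h1
  simp only [ev, hq, Option.bind_some, stepR] at h2
  rw [ev_cons u _ (.X b)] at h1
  constructor
  · simp only [lo, hi, hq, h1, Option.getD_some, h2]
  · simp only [hi, opp, sameDir]
    simp [ev_Y u b a]

theorem st_nest {u : List A} {Z W : RLetter A} {w} (h : C u (Z :: w)) :
    lo u Z w ≤ lo u W (Z :: w) ∧ hi u W (Z :: w) ≤ hi u Z w ∧
      (lo u Z w < lo u W (Z :: w) ∨ hi u W (Z :: w) < hi u Z w) := by
  obtain ⟨p, h1, h2, h3⟩ := C_last h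
  obtain ⟨q, hq⟩ := C_ev h.1 Z
  cases Z with
  | X a =>
    have h1' : nextOcc u a (lo u (.X a) w) = some p := by
      simpa [ev, hq, stepR, lo] using h1
    cases W with
    | X b =>
      have := st_XX (b := b) h
      rw [h1'] at this
      have h4 := Option.some.inj this.1
      omega
    | Y b =>
      have := st_XY (b := b) h
      rw [h1'] at this
      have h4 := Option.some.inj this.2
      omega
  | Y a =>
    have h1' : prevOcc u a (hi u (.Y a) w) = some p := by
      simpa [ev, hq, stepR, hi] using h1
    cases W with
    | X b =>
      have := st_YX (b := b) h
      rw [h1'] at this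
      have h4 := Option.some.inj this.1
      omega
    | Y b =>
      have := st_YY (b := b) h
      rw [h1'] at this
      have h4 := Option.some.inj this.2
      omega

theorem C_suffix {u : List A} (t : List (RLetter A)) {w} (h : C u (t ++ w)) : C u w := by
  induction t with
  | nil => exact h
  | cons Z t ih => exact ih h.1

theorem C_take {u : List A} {r : List (RLetter A)} (h : C u r.reverse) (k : ℕ) :
    C u (r.take k).reverse := by
  rw [← List.take_append_drop k r, List.reverse_append] at h
  exact C_suffix _ h

theorem take_rev {r : List (RLetter A)} {k : ℕ} {Z} (h : r[k]? = some Z) :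
    (r.take (k+1)).reverse = Z :: (r.take k).reverse := by
  rw [List.take_add_one, h]; simp

theorem cond_of_C {u : List A} {r : List (RLetter A)} (hr : r ≠ []) (h : C u r.reverse) :
    Condensed u r := by
  have hlen : 0 < r.length := List.length_pos_iff.2 hr
  have hk : ∀ k, k < r.length → ∃ Z, r[k]? = some Z := fun k hk => ⟨r[k], by simp [hk]⟩
  have hC : ∀ k Z, r[k]? = some Z → C u (Z :: (r.take k).reverse) := by
    intro k Z hZ
    rw [← take_rev hZ]; exact C_take h _
  obtain ⟨Z0, hZ0⟩ := hk 0 hlen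
  obtain ⟨Zn, hZn⟩ := hk (r.length - 1) (by omega)
  obtain ⟨p, hp, hp1, hp2⟩ := C_last (hC _ _ hZn)
  refine ⟨p, fun k => match r[k]? with | some Z => lo u Z (r.take k).reverse | none => 0,
    fun k => match r[k]? with | some Z => hi u Z (r.take k).reverse | none => 0, ?_, ?_, ?_,
    ?_, ?_, ?_, ?_, ?_, ?_, ?_⟩
  · rw [← take_rev hZn, Nat.sub_add_cancel hlen, List.take_length] at hp
    cases hrr : r.reverse with
    | nil => simp at hrr; exact absurd hrr hr
    | cons V t =>
      rw [hrr] at hp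
      have : r = (V :: t).reverse := by rw [← hrr, List.reverse_reverse]
      rw [this, evalR_rev u V Zn, hp]
  · simp only [hZ0]; cases Z0 <;> simp [lo, ev, opp, startPos]
  · simp only [hZ0]; cases Z0 <;> simp [hi, ev, opp, startPos]
  · intro l a b hl h1 h2
    obtain ⟨k, rfl⟩ : ∃ k, l = k + 1 := ⟨l - 1, by omega⟩
    simp only [Nat.add_sub_cancel] at *
    simp only [h1, h2]
    rw [take_rev h1]
    exact st_XX (hC _ _ h1)
  · intro l a b hl h1 h2
    obtain ⟨k, rfl⟩ : ∃ k, l = k + 1 := ⟨l - 1, by omega⟩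
    simp only [Nat.add_sub_cancel] at *
    simp only [h1, h2]
    rw [take_rev h1]
    exact st_YY (hC _ _ h1)
  · intro l a b hl h1 h2
    obtain ⟨k, rfl⟩ : ∃ k, l = k + 1 := ⟨l - 1, by omega⟩
    simp only [Nat.add_sub_cancel] at *
    simp only [h1, h2]
    rw [take_rev h1]
    exact st_XY (hC _ _ h1)
  · intro l a b hl h1 h2
    obtain ⟨k, rfl⟩ : ∃ k, l = k + 1 := ⟨l - 1, by omega⟩
    simp only [Nat.add_sub_cancel] at *
    simp only [h1, h2]
    rw [take_rev h1]
    exact st_YX (hC _ _ h1)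
  · intro l hl hl'
    obtain ⟨k, rfl⟩ : ∃ k, l = k + 1 := ⟨l - 1, by omega⟩
    obtain ⟨Z, h1⟩ := hk k (by omega)
    obtain ⟨W, h2⟩ := hk (k+1) (by omega)
    simp only [Nat.add_sub_cancel]
    simp only [h1, h2]
    rw [take_rev h1]
    exact st_nest (hC _ _ h1)
  · simp only [hZn]; exact hp1
  · simp only [hZn]; exact hp2

/-- The near end of an interval. -/
def near : RLetter A → ℕ → ℕ → ℕ
  | .X _, i, _ => i
  | .Y _, _, j => j

/-- The far end of an interval. -/
def far : RLetter A → ℕ → ℕ → ℕ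
  | .X _, _, j => j
  | .Y _, i, _ => i

theorem C_of_cond {u : List A} {r : List (RLetter A)} (hr : r ≠ []) (h : Condensed u r) :
    C u r.reverse := by
  have hlen : 0 < r.length := List.length_pos_iff.2 hr
  have hk : ∀ k, k < r.length → ∃ Z, r[k]? = some Z := fun k hk => ⟨r[k], by simp [hk]⟩
  obtain ⟨p, i, j, he, hi0, hj0, hXX, hYY, hXY, hYX, hn, hp1, hp2⟩ := h
  have hin : ∀ d l, l + d = r.length - 1 → i l < p ∧ p < j l := by
    intro d
    induction d with
    | zero => intro l hl; simp only [Nat.add_zero] at hl; subst hl; exact ⟨hp1, hp2⟩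
    | succ d ih =>
      intro l hl
      have h1 := ih (l+1) (by omega)
      have h2 := hn (l+1) (by omega) (by omega)
      simp only [Nat.add_sub_cancel] at h2
      omega
  have key : ∀ l Z, r[l]? = some Z → C u (r.take l).reverse ∧
      ev u Z (r.take l).reverse = some (near Z (i l) (j l)) ∧
      ev u (op Z) (opp Z (r.take l).reverse) = some (far Z (i l) (j l)) := by
    intro l
    induction l with
    | zero =>
      intro Z _
      refine ⟨trivial, ?_⟩
      cases Z <;> simp [ev, opp, op, near, far, startPos, hi0, hj0]
    | succ l ih =>
      intro W hW
      have hll : l + 1 < r.length := (List.getElem?_eq_some_iff.1 hW).1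
      obtain ⟨Z, hZ⟩ := hk l (by omega)
      obtain ⟨c1, c2, c3⟩ := ih Z hZ
      have hin' := hin (r.length - 1 - (l+1)) (l+1) (by omega)
      have hn' := hn (l+1) (by omega) hll
      rw [take_rev hZ]
      simp only [Nat.add_sub_cancel] at hn'
      cases Z with
      | X a =>
        simp only [near, far, op] at c2 c3
        cases W with
        | X b =>
          have hh := hXX (l+1) a b (by omega) hZ hW
          simp only [Nat.add_sub_cancel] at hh
          have he1 : ev u (.X b) (.X a :: (r.take l).reverse) = some (i (l+1)) := by
            simp [ev, c2, stepR, hh.1]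
          refine ⟨⟨c1, i (l+1), j l, he1, c3, ?_⟩, he1, ?_⟩
          · simp only [Bef]; omega
          · simp only [opp, sameDir, if_true, op, far]
            rw [opp_same (Z := .X b) (W := .X a) rfl, ev_Y u b a, c3, hh.2]
        | Y b =>
          have hh := hXY (l+1) a b (by omega) hZ hW
          simp only [Nat.add_sub_cancel] at hh
          have he1 : ev u (.Y b) (.X a :: (r.take l).reverse) = some (j (l+1)) := by
            simp [ev, c2, stepR, hh.2]
          refine ⟨⟨c1, j (l+1), j l, he1, c3, ?_⟩, he1, ?_⟩
          · simp only [Bef]; omega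
          · simp only [opp, sameDir, op, far]
            simp [ev_X u b a, c2, hh.1]
      | Y a =>
        simp only [near, far, op] at c2 c3
        cases W with
        | X b =>
          have hh := hYX (l+1) a b (by omega) hZ hW
          simp only [Nat.add_sub_cancel] at hh
          have he1 : ev u (.X b) (.Y a :: (r.take l).reverse) = some (i (l+1)) := by
            simp [ev, c2, stepR, hh.1]
          refine ⟨⟨c1, i (l+1), i l, he1, c3, ?_⟩, he1, ?_⟩
          · simp only [Bef]; omega
          · simp only [opp, sameDir, op, far]
            simp [ev_Y u b a, c2, hh.2]
        | Y b =>
          have hh := hYY (l+1) a b (by omega) hZ hW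
          simp only [Nat.add_sub_cancel] at hh
          have he1 : ev u (.Y b) (.Y a :: (r.take l).reverse) = some (j (l+1)) := by
            simp [ev, c2, stepR, hh.2]
          refine ⟨⟨c1, j (l+1), i l, he1, c3, ?_⟩, he1, ?_⟩
          · simp only [Bef]; omega
          · simp only [opp, sameDir, if_true, op, far]
            rw [opp_same (Z := .Y b) (W := .Y a) rfl, ev_X u b a, c3, hh.1]
  obtain ⟨Zn, hZn⟩ := hk (r.length - 1) (by omega)
  obtain ⟨c1, c2, c3⟩ := key _ _ hZn
  have hrev : r.reverse = Zn :: (r.take (r.length - 1)).reverse := by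
    rw [← take_rev hZn, Nat.sub_add_cancel hlen, List.take_length]
  rw [hrev]
  refine ⟨c1, p, _, ?_, c3, ?_⟩
  · rw [← evalR_rev u Zn, ← hrev, List.reverse_reverse, he]
  · cases Zn <;> simp only [Bef, far] <;> assumption

theorem cond_iff {u : List A} {Z : RLetter A} {w} :
    Condensed u (Z :: w).reverse ↔ C u (Z :: w) := by
  constructor
  · intro h
    have := C_of_cond (by simp) h
    rwa [List.reverse_reverse] at this
  · intro h
    exact cond_of_C (by simp) (by rwa [List.reverse_reverse])

theorem def_iff {u : List A} {Z : RLetter A} {w} :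
    Defined u (Z :: w).reverse ↔ ∃ p, ev u Z (Z :: w) = some p := by
  rw [Defined, evalR_rev u Z Z, Option.isSome_iff_exists]

theorem pos_rev {u : List A} {Z : RLetter A} {w} :
    pos u (Z :: w).reverse = (ev u Z (Z :: w)).getD 0 := by
  rw [pos, evalR_rev u Z Z]

theorem uR_iff {m n : ℕ} {r : List (RLetter A)} :
    uR m n r ↔ r ≠ [] ∧ numBlocks r ≤ m ∧ r.length ≤ n := by
  constructor
  · rintro ((⟨m', n', h1, h2, h3, h4, a, t, rfl⟩ | ⟨m', n', h1, h2, h3, h4, a, t, rfl⟩) |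
      (⟨m', n', h1, h2, h3, h4, a, t, rfl⟩ | ⟨m', n', h1, h2, h3, h4, a, t, rfl⟩)) <;>
    exact ⟨by simp, by omega, by omega⟩
  · rintro ⟨h0, h1, h2⟩
    cases r with
    | nil => exact absurd rfl h0
    | cons Z t =>
      cases Z with
      | X a => exact Or.inl (Or.inl ⟨_, _, h1, h2, rfl, rfl, a, t, rfl⟩)
      | Y a => exact Or.inr (Or.inl ⟨_, _, h1, h2, rfl, rfl, a, t, rfl⟩)

theorem uR_rev {m n : ℕ} {Z : RLetter A} {w} :
    uR m n (Z :: w).reverse ↔ numBlocks (Z :: w) ≤ m ∧ w.length + 1 ≤ n := by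
  rw [uR_iff, nb_reverse]; simp

theorem uR_form {m n : ℕ} {r : List (RLetter A)} (h : uR m n r) :
    ∃ Z w, r = (Z :: w).reverse := by
  have := (uR_iff.1 h).1
  cases hr : r.reverse with
  | nil => simp at hr; exact absurd hr this
  | cons Z w => exact ⟨Z, w, by rw [← hr, List.reverse_reverse]⟩

theorem C_agree {m n : ℕ} {u v : List A} (h1 : WI1 m n u v) (h2 : WI2 m n u v)
    (w : List (RLetter A)) : ∀ Z, numBlocks (Z :: w) ≤ m → (Z :: w).length ≤ n →
      (C u (Z :: w) ↔ C v (Z :: w)) := by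
  have D : ∀ (Z : RLetter A) w, numBlocks (Z :: w) ≤ m → w.length + 1 ≤ n →
      ((∃ p, ev u Z (Z :: w) = some p) ↔ ∃ p, ev v Z (Z :: w) = some p) := by
    intro Z w ha hb
    have := h1 _ (uR_rev.2 ⟨ha, hb⟩)
    rwa [def_iff, def_iff] at this
  induction w with
  | nil =>
    intro Z hm hn
    have hD := D Z [] hm hn
    have aux : ∀ x : List A, C x [Z] ↔ ∃ p, ev x Z [Z] = some p := by
      intro x
      constructor
      · rintro ⟨_, p, b, hp, _⟩; exact ⟨p, hp⟩
      · rintro ⟨p, hp⟩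
        exact ⟨trivial, p, _, hp, rfl, occ_bef_start (ev_occ hp)⟩
    rw [aux, aux, hD]
  | cons W w ih =>
    intro Z hm hn
    have hb := nb_le_cons Z (W :: w)
    simp only [List.length_cons] at hn
    have hW := ih W (hb.trans hm) (by simp only [List.length_cons]; omega)
    have hD := D Z (W :: w) hm (by simp only [List.length_cons]; omega)
    have hlt := nb_opp_lt Z (W :: w) (by simp)
    show (C u (W :: w) ∧ _) ↔ (C v (W :: w) ∧ _)
    rw [hW]
    refine and_congr_right fun hCv => ?_
    have hCu := hW.2 hCv
    obtain ⟨b, hbu⟩ := C_ev (C_opp Z hCu) (op Z)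
    obtain ⟨b', hbv⟩ := C_ev (C_opp Z hCv) (op Z)
    have main : ∀ p p', ev u Z (Z :: W :: w) = some p → ev v Z (Z :: W :: w) = some p' →
        (Bef Z p b ↔ Bef Z p' b') := by
      intro p p' hp hp'
      cases ho : opp Z (W :: w) with
      | nil =>
        rw [ho] at hbu hbv
        simp only [ev, Option.some.injEq] at hbu hbv
        subst hbu hbv
        exact iff_of_true (occ_bef_start (ev_occ hp)) (occ_bef_start (ev_occ hp'))
      | cons V s =>
        rw [ho] at hbu hbv hlt
        rw [ev_cons _ _ V] at hbu hbv
        simp only [List.length_cons] at hlt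
        have := h2 (Z :: W :: w).reverse (V :: s).reverse
          (uR_rev.2 ⟨hm, by simp only [List.length_cons]; omega⟩)
          (uR_rev.2 ⟨by omega, by omega⟩)
          (def_iff.2 ⟨p, hp⟩) (def_iff.2 ⟨p', hp'⟩) (def_iff.2 ⟨b, hbu⟩) (def_iff.2 ⟨b', hbv⟩)
        simp only [pos_rev, hp, hp', hbu, hbv, Option.getD_some] at this
        cases Z with
        | X a => simp only [Bef]; rw [← compare_lt_iff_lt, this, compare_lt_iff_lt]
        | Y a =>
          have e : compare p b = .gt ↔ compare p' b' = .gt := by rw [this]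
          exact compare_gt_iff_gt.symm.trans (e.trans compare_gt_iff_gt)
    constructor
    · rintro ⟨p, c, hp, hc, hpc⟩
      obtain ⟨p', hp'⟩ := hD.1 ⟨p, hp⟩
      rw [hbu] at hc; obtain rfl := Option.some.inj hc
      exact ⟨p', b', hp', hbv, (main p p' hp hp').1 hpc⟩
    · rintro ⟨p', c, hp', hc, hpc⟩
      obtain ⟨p, hp⟩ := hD.2 ⟨p', hp'⟩
      rw [hbv] at hc; obtain rfl := Option.some.inj hc
      exact ⟨p, b, hp, hbu, (main p p' hp hp').2 hpc⟩

theorem cond_def {u : List A} {r : List (RLetter A)} (h : Condensed u r) : Defined u r := by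
  obtain ⟨p, i, j, h, _⟩ := h
  simp [Defined, h]

theorem endsX_rev {Z : RLetter A} {w} : endsX (Z :: w).reverse ↔ ∃ a, Z = .X a := by
  simp [endsX]

theorem endsY_rev {Z : RLetter A} {w} : endsY (Z :: w).reverse ↔ ∃ a, Z = .Y a := by
  simp [endsY]

theorem ends_rev {Z Z' : RLetter A} {w w'} :
    ((endsX (Z :: w).reverse ∧ endsY (Z' :: w').reverse) ∨
      (endsY (Z :: w).reverse ∧ endsX (Z' :: w').reverse)) ↔ sameDir Z Z' = false := by
  simp only [endsX_rev, endsY_rev]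
  cases Z <;> cases Z' <;> simp [sameDir]

/-- Packaged reduction for a defined ranker. -/
theorem resE {m n : ℕ} {u v : List A} (h1 : WI1c m n u v) {Z : RLetter A} {w}
    (hr : uR m n (Z :: w).reverse) (hu : Defined u (Z :: w).reverse) :
    ∃ W s, Condensed u (W :: s).reverse ∧ Condensed v (W :: s).reverse ∧
      pos u (W :: s).reverse = pos u (Z :: w).reverse ∧
      pos v (W :: s).reverse = pos v (Z :: w).reverse ∧ s.length ≤ w.length ∧
      numBlocks (W :: s) ≤ numBlocks (Z :: w) ∧
      (sameDir Z W = true ∨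
        (numBlocks (W :: s) + 1 ≤ numBlocks (Z :: w) ∧ s.length + 1 ≤ w.length)) := by
  have H : ∀ (Z : RLetter A) w, numBlocks (Z :: w) ≤ m → (Z :: w).length ≤ n →
      (C u (Z :: w) ↔ C v (Z :: w)) := by
    intro Z w ha hb
    have := h1 _ (uR_rev.2 ⟨ha, hb⟩)
    rwa [cond_iff, cond_iff] at this
  have hr' := uR_rev.1 hr
  obtain ⟨p, hp⟩ := def_iff.1 hu
  rcases resD H w Z hr'.1 hr'.2 with h | ⟨W, s, c1, c2, c3, c4, c5, c6, c7⟩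
  · rw [h.1] at hp; cases hp
  · refine ⟨W, s, cond_iff.2 c1, cond_iff.2 c2, by rw [pos_rev, pos_rev, c3],
      by rw [pos_rev, pos_rev, c4], c5, (nb_le_cons Z _).trans c6, ?_⟩
    by_cases hs : sameDir Z W = true
    · exact Or.inl hs
    · right
      rw [nb_cons, if_neg hs] at c6
      have := c7.resolve_left hs
      omega

theorem def_mp {m n : ℕ} {u v : List A} (h1 : WI1c m n u v) {Z : RLetter A} {w}
    (hr : uR m n (Z :: w).reverse) (hu : Defined u (Z :: w).reverse) :
    Defined v (Z :: w).reverse := by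
  have H : ∀ (Z : RLetter A) w, numBlocks (Z :: w) ≤ m → (Z :: w).length ≤ n →
      (C u (Z :: w) ↔ C v (Z :: w)) := by
    intro Z w ha hb
    have := h1 _ (uR_rev.2 ⟨ha, hb⟩)
    rwa [cond_iff, cond_iff] at this
  have hr' := uR_rev.1 hr
  obtain ⟨p, hp⟩ := def_iff.1 hu
  rcases resD H w Z hr'.1 hr'.2 with h | ⟨W, s, c1, c2, c3, c4, _⟩
  · rw [h.1] at hp; cases hp
  · obtain ⟨q, hq⟩ := C_ev c2 W
    exact def_iff.2 ⟨q, c4 ▸ hq⟩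

theorem compare_swap_eq {a b c d : ℕ} (h : compare a b = compare c d) :
    compare b a = compare d c := by
  rw [← Nat.compare_swap a b, ← Nat.compare_swap c d, h]

/-- The Weis–Immerman conditions with "defined" are equivalent to the
same conditions with "condensed". -/
theorem statement8 (m n : ℕ) (hm : 1 ≤ m) (hmn : m ≤ n) (u v : List A) :
    (WI1 m n u v ∧ WI2 m n u v ∧ WI3 m n u v) ↔
    (WI1c m n u v ∧ WI2c m n u v ∧ WI3c m n u v) := by
  constructor
  · rintro ⟨h1, h2, h3⟩
    refine ⟨?_, ?_, ?_⟩
    · intro r hr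
      obtain ⟨Z, w, rfl⟩ := uR_form hr
      rw [cond_iff, cond_iff]
      have := uR_rev.1 hr
      exact C_agree h1 h2 w Z this.1 this.2
    · intro r r' hr hr' a b c d
      exact h2 r r' hr hr' (cond_def a) (cond_def b) (cond_def c) (cond_def d)
    · intro r r' hr hr' he a b c d
      exact h3 r r' hr hr' he (cond_def a) (cond_def b) (cond_def c) (cond_def d)
  · rintro ⟨h1, h2, h3⟩
    have h1' : WI1c m n v u := fun r hr => (h1 r hr).symm
    refine ⟨?_, ?_, ?_⟩
    · intro r hr
      obtain ⟨Z, w, rfl⟩ := uR_form hr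
      exact ⟨def_mp h1 hr, def_mp h1' hr⟩
    · intro r r' hr hr' a _ c _
      obtain ⟨Z, w, rfl⟩ := uR_form hr
      obtain ⟨Z', w', rfl⟩ := uR_form hr'
      have g := uR_rev.1 hr
      have g' := uR_rev.1 hr'
      obtain ⟨W, s, c1, c2, c3, c4, c5, c6, -⟩ := resE h1 hr a
      obtain ⟨W', s', d1, d2, d3, d4, d5, d6, -⟩ :=
        resE h1 (uR_rev.2 ⟨by omega, by omega⟩) c
      rw [← c3, ← c4, ← d3, ← d4]
      exact h2 _ _ (uR_rev.2 ⟨by omega, by omega⟩) (uR_rev.2 ⟨by omega, by omega⟩) c1 c2 d1 d2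
    · intro r r' hr hr' he a _ c _
      obtain ⟨Z, w, rfl⟩ := uR_form hr
      obtain ⟨Z', w', rfl⟩ := uR_form hr'
      have g := uR_rev.1 hr
      have g' := uR_rev.1 hr'
      obtain ⟨W, s, c1, c2, c3, c4, c5, c6, c7⟩ := resE h1 hr a
      obtain ⟨W', s', d1, d2, d3, d4, d5, d6, d7⟩ :=
        resE h1 (uR_rev.2 ⟨by omega, by omega⟩) c
      rw [← c3, ← c4, ← d3, ← d4]
      rw [ends_rev] at he
      rcases d7 with d7 | d7
      · rcases c7 with c7 | c7
        · refine h3 _ _ (uR_rev.2 ⟨by omega, by omega⟩) (uR_rev.2 ⟨by omega, by omega⟩)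
            (ends_rev.2 ?_) c1 c2 d1 d2
          cases Z <;> cases Z' <;> cases W <;> cases W' <;> simp_all [sameDir]
        · exact compare_swap_eq (h2 _ _ (uR_rev.2 ⟨by omega, by omega⟩)
            (uR_rev.2 ⟨by omega, by omega⟩) d1 d2 c1 c2)
      · exact h2 _ _ (uR_rev.2 ⟨by omega, by omega⟩)
          (uR_rev.2 ⟨by omega, by omega⟩) c1 c2 d1 d2

end RankerPaper
end
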